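/- arXiv:1812.04086 — 4 statements merged into one kernel-verified Lean document; each statement's English description precedes it below -/
import Mathlib

section
/- Let (Ξ,𝒜,m) be a complete σ-finite measure space and let X be a Suslin space. Let h : Ξ × X → ℝ ∪ {±∞} be 𝒜 ⊗ B(X)-measurable and let 𝒳 ⊆ L⁰(Ξ;X) be a decomposable set of measurable functions. If inf_{x∈𝒳} ∫_Ξ h(ξ, x(ξ)) dm(ξ) < +∞, then inf_{x∈𝒳} ∫_Ξ h(ξ, x(ξ)) dm(ξ) = ∫_Ξ inf_{x∈X} h(ξ, x) dm(ξ). -/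
open MeasureTheory Filter Set Topology
open scoped ENNReal Classical

/-- The positive part of an extended real, as an extended nonnegative real. -/
noncomputable def erealPos (a : EReal) : ℝ≥0∞ := if a = ⊤ then ⊤ else ENNReal.ofReal a.toReal

/-- The integral of an extended-real-valued function, defined as `+∞` unless the
positive part is integrable. -/
noncomputable def eIntegral {α : Type*} [MeasurableSpace α] (μ : Measure α)
    (f : α → EReal) : EReal :=
  if ∫⁻ a, erealPos (f a) ∂μ = ⊤ then ⊤
  else ((∫⁻ a, erealPos (f a) ∂μ : ℝ≥0∞) : EReal) - ((∫⁻ a, erealPos (-f a) ∂μ : ℝ≥0∞) : EReal)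

/-- A Suslin space: a Hausdorff topological space which is the continuous image of a
Polish space. -/
def IsSuslin (X : Type*) [TopologicalSpace X] : Prop :=
  ∃ (P : Type) (_ : TopologicalSpace P), PolishSpace P ∧
    ∃ f : P → X, Continuous f ∧ Function.Surjective f

/-- A set `𝒳` of measurable functions `Ξ → X` is decomposable (w.r.t. the measure `m`) if
for every `x ∈ 𝒳`, every measurable `A` of finite measure and every measurable `x̄` whose
range has compact closure, the function `1_A x̄ + 1_{Aᶜ} x` belongs to `𝒳`. -/
def Decomposable {Ξ X : Type*} [MeasurableSpace Ξ] [TopologicalSpace X] [MeasurableSpace X]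
    (m : Measure Ξ) (𝒳 : Set (Ξ → X)) : Prop :=
  ∀ x ∈ 𝒳, ∀ A : Set Ξ, MeasurableSet A → m A < ⊤ →
    ∀ xb : Ξ → X, Measurable xb → IsCompact (closure (Set.range xb)) →
      (fun ξ => if ξ ∈ A then xb ξ else x ξ) ∈ 𝒳

theorem exists_factor {Ξ P : Type*} [MeasurableSpace Ξ] [MeasurableSpace P]
    {S : Set (Ξ × P)} (hS : MeasurableSet S) :
    ∃ (Z : Type) (_ : MeasurableSpace Z) (_ : StandardBorelSpace Z) (φ : Ξ → Z) (T : Set (Z × P)),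
      Measurable φ ∧ MeasurableSet T ∧ S = (fun q : Ξ × P => (φ q.1, q.2)) ⁻¹' T := by
  have hgen := (generateFrom_prod (α := Ξ) (β := P)).symm
  induction S, hS using MeasurableSpace.induction_on_inter hgen isPiSystem_prod with
  | empty =>
    exact ⟨Bool, inferInstance, inferInstance, fun _ => true, ∅, measurable_const,
      MeasurableSet.empty, by simp⟩
  | basic t ht =>
    obtain ⟨A, hA, B, hB, rfl⟩ := ht
    refine ⟨Bool, inferInstance, inferInstance, fun ξ => decide (ξ ∈ A), {true} ×ˢ B, ?_,
      (measurableSet_singleton _).prod hB, ?_⟩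
    · exact measurable_to_bool (by simpa [preimage] using hA)
    · ext ⟨a, b⟩; simp
  | compl t ht ih =>
    obtain ⟨Z, i1, i2, φ, T, h1, h2, rfl⟩ := ih
    exact ⟨Z, i1, i2, φ, Tᶜ, h1, h2.compl, rfl⟩
  | iUnion f hd hf ih =>
    choose Z i1 i2 φ T h1 h2 h3 using ih
    refine ⟨∀ n, Z n, inferInstance, inferInstance, fun ξ n => φ n ξ,
      ⋃ n, (fun q : (∀ n, Z n) × P => (q.1 n, q.2)) ⁻¹' T n, ?_, ?_, ?_⟩
    · exact measurable_pi_lambda _ h1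
    · refine MeasurableSet.iUnion fun n => ?_
      exact (((measurable_pi_apply n).comp measurable_fst).prodMk measurable_snd) (h2 n)
    · ext q; simp only [mem_iUnion, mem_preimage]
      exact exists_congr fun n => by conv_lhs => rw [h3 n]
                                     rfl

theorem exists_box {Z : Type*} [TopologicalSpace Z] [PolishSpace Z] [MeasurableSpace Z]
    [BorelSpace Z] (μ : Measure Z) [IsFiniteMeasure μ] (F : (ℕ → ℕ) → Z) (hF : Continuous F)
    {ε : ℝ≥0∞} (hε : ε ≠ 0) :
    ∃ n : ℕ → ℕ, μ (range F) ≤ μ (F '' {x | ∀ i, x i ≤ n i}) + ε := by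
  obtain ⟨δ, hδ, hδs⟩ := ENNReal.exists_pos_sum_of_countable' (ENNReal.half_pos hε).ne' ℕ
  have step : ∀ (D : Set (ℕ → ℕ)) (i : ℕ), ∃ N : ℕ,
      μ (F '' D) ≤ μ (F '' (D ∩ {x | x i ≤ N})) + δ i := by
    intro D i
    have hU : F '' D = ⋃ N : ℕ, F '' (D ∩ {x | x i ≤ N}) := by
      rw [← image_iUnion, ← inter_iUnion]
      congr 1
      ext x; simp only [mem_inter_iff, mem_iUnion, mem_ofPred_eq]
      exact ⟨fun h => ⟨h, x i, le_rfl⟩, fun h => h.1⟩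
    have hmono : Monotone fun N : ℕ => F '' (D ∩ {x | x i ≤ N}) := by
      intro a b hab
      exact image_mono (inter_subset_inter_right _ fun x hx => le_trans hx hab)
    have hs : μ (F '' D) = ⨆ N : ℕ, μ (F '' (D ∩ {x | x i ≤ N})) := by
      conv_lhs => rw [hU]
      exact hmono.measure_iUnion
    by_contra! hcon
    have h0 : μ (F '' D) ≠ ⊤ := measure_ne_top _ _
    have : μ (F '' D) ≤ μ (F '' D) - δ i := by
      conv_lhs => rw [hs]
      refine iSup_le fun N => ?_
      exact ENNReal.le_sub_of_add_le_right (ne_top_of_le_ne_top h0 (le_trans le_add_self (hcon N).le)) (hcon N).le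
    have hpos : μ (F '' D) ≠ 0 := by
      intro h; have := hcon 0; simp [h] at this
    exact absurd this (not_le.2 (ENNReal.sub_lt_self h0 hpos (hδ i).ne'))
  choose N hN using step
  let D : ℕ → Set (ℕ → ℕ) := fun k => Nat.rec univ (fun i D => D ∩ {x | x i ≤ N D i}) k
  let n : ℕ → ℕ := fun i => N (D i) i
  have hD1 : ∀ k, D (k+1) = D k ∩ {x | x k ≤ n k} := fun k => rfl
  have hD : ∀ k, D k = {x | ∀ i < k, x i ≤ n i} := by
    intro k
    induction k with
    | zero => ext x; simp [D]
    | succ k ih =>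
      rw [hD1, ih]; ext x; simp only [mem_inter_iff, mem_ofPred_eq, Nat.lt_succ_iff_lt_or_eq]
      constructor
      · rintro ⟨a, b⟩ i (hi | rfl)
        exacts [a i hi, b]
      · intro a; exact ⟨fun i hi => a i (Or.inl hi), a k (Or.inr rfl)⟩
  have hsum : ∀ k, μ (range F) ≤ μ (F '' D k) + ∑ i ∈ Finset.range k, δ i := by
    intro k
    induction k with
    | zero => simp [D]
    | succ k ih =>
      refine ih.trans ?_
      rw [Finset.sum_range_succ, add_comm _ (δ k), ← add_assoc]
      gcongr
      exact hN (D k) k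
  have hKc : IsCompact {x : ℕ → ℕ | ∀ i, x i ≤ n i} := by
    have : {x : ℕ → ℕ | ∀ i, x i ≤ n i} = Set.pi univ fun i => Iic (n i) := by
      ext x; simp [Pi.le_def]
    rw [this]
    exact isCompact_univ_pi fun i => (finite_Iic (n i)).isCompact
  refine ⟨n, ?_⟩
  obtain ⟨U, hKU, hUo, hU⟩ := (F '' {x | ∀ i, x i ≤ n i}).exists_isOpen_le_add μ
    (ENNReal.half_pos hε).ne'
  have key : ∃ k, F '' D k ⊆ U := by
    by_contra! hcon
    have : ∀ k, ∃ x ∈ D k, F x ∉ U := by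
      intro k
      obtain ⟨_, ⟨x, hx, rfl⟩, hxU⟩ := not_subset.1 (hcon k)
      exact ⟨x, hx, hxU⟩
    choose x hxD hxU using this
    obtain ⟨y, hy, ψ, hψ, hlim⟩ := hKc.tendsto_subseq (x := fun k i => min (x k i) (n i))
      (fun k i => min_le_right _ _)
    have hlim2 : Tendsto (x ∘ ψ) atTop (𝓝 y) := by
      rw [tendsto_pi_nhds] at hlim ⊢
      intro i
      refine (hlim i).congr' ?_
      filter_upwards [eventually_gt_atTop i] with k hk
      have := hxD (ψ k)
      rw [hD] at this
      exact min_eq_left (this i (hk.trans_le (hψ.id_le k)))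
    have hcl : IsClosed (F ⁻¹' Uᶜ) := hUo.isClosed_compl.preimage hF
    have := hcl.mem_of_tendsto hlim2 (Eventually.of_forall fun k => hxU (ψ k))
    exact this (hKU ⟨y, hy, rfl⟩)
  obtain ⟨k, hk⟩ := key
  calc μ (range F) ≤ μ (F '' D k) + ∑ i ∈ Finset.range k, δ i := hsum k
    _ ≤ μ U + ε / 2 := by
        gcongr
        exact (ENNReal.sum_le_tsum _).trans hδs.le
    _ ≤ (μ (F '' {x | ∀ i, x i ≤ n i}) + ε / 2) + ε / 2 := by gcongr
    _ = _ := by rw [add_assoc, ENNReal.add_halves]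

theorem exists_emb : ∃ e : (ℕ → ℕ) → ℝ, Continuous e ∧ Function.Injective e := by
  let j : (ℕ → ℕ) → (ℕ → ℕ → Bool) := fun x i k => decide (x i = k)
  have hj : Continuous j := by
    refine continuous_pi fun i => continuous_pi fun k => ?_
    exact (continuous_of_discreteTopology (f := fun m : ℕ => decide (m = k))).comp
      (continuous_apply i)
  have hji : Function.Injective j := by
    intro x y hxy
    ext i
    have := congrFun (congrFun hxy i) (y i)
    simpa [j] using this
  refine ⟨fun x => (cantorSetHomeomorphNatToBool.symm
    (cantorSpaceHomeomorphNatToCantorSpace.symm (j x)) : ℝ), ?_, ?_⟩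
  · fun_prop
  · intro x y hxy
    exact hji (cantorSpaceHomeomorphNatToCantorSpace.symm.injective
      (cantorSetHomeomorphNatToBool.symm.injective (Subtype.ext hxy)))

theorem exists_sel {Z : Type*} [TopologicalSpace Z] [T2Space Z] [MeasurableSpace Z]
    [BorelSpace Z] (F : (ℕ → ℕ) → Z) (hF : Continuous F) (K : Set (ℕ → ℕ)) (hK : IsCompact K)
    (hne : K.Nonempty) :
    ∃ t : Z → (ℕ → ℕ), Measurable t ∧ (∀ z, t z ∈ K) ∧ ∀ z ∈ F '' K, F (t z) = z := by
  obtain ⟨e, he, hei⟩ := exists_emb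
  obtain ⟨x0, hx0⟩ := hne
  have hemb : MeasurableEmbedding e := he.measurableEmbedding hei
  have hmin : ∀ z, ∃ x ∈ K, (z ∈ F '' K → F x = z ∧ ∀ y ∈ K, F y = z → e x ≤ e y) ∧
      (z ∉ F '' K → x = x0) := by
    intro z
    by_cases hz : z ∈ F '' K
    · have hc : IsCompact (K ∩ F ⁻¹' {z}) := hK.inter_right (isClosed_singleton.preimage hF)
      obtain ⟨y, hy, hyz⟩ := hz
      obtain ⟨x, hx, hxm⟩ := hc.exists_isMinOn ⟨y, hy, hyz⟩ he.continuousOn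
      exact ⟨x, hx.1, fun _ => ⟨hx.2, fun w hw hwz => hxm ⟨hw, hwz⟩⟩,
        fun h => absurd ⟨y, hy, hyz⟩ h⟩
    · exact ⟨x0, hx0, fun h => absurd h hz, fun _ => rfl⟩
  choose t htK ht1 ht2 using hmin
  have hmeas : ∀ L : Set (ℕ → ℕ), IsCompact L → MeasurableSet (F '' L) := fun L hL =>
    (hL.image hF).isClosed.measurableSet
  have hs : Measurable fun z => e (t z) := by
    refine measurable_of_Iic fun a => ?_
    have : (fun z => e (t z)) ⁻¹' Iic a = F '' (K ∩ e ⁻¹' Iic a) ∪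
        ((F '' K)ᶜ ∩ {z | e x0 ≤ a}) := by
      ext z
      by_cases hz : z ∈ F '' K
      · constructor
        · intro h
          exact Or.inl ⟨t z, ⟨htK z, h⟩, (ht1 z hz).1⟩
        · rintro (⟨y, ⟨hy, hya⟩, rfl⟩ | h)
          · exact ((ht1 _ hz).2 y hy rfl).trans hya
          · exact absurd hz h.1
      · have h2 := ht2 z hz
        constructor
        · intro h
          refine Or.inr ⟨hz, ?_⟩
          rw [mem_preimage, h2] at h; exact h
        · rintro (⟨y, ⟨hy, hya⟩, rfl⟩ | h)
          · exact absurd ⟨y, hy, rfl⟩ hz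
          · rw [mem_preimage, h2]; exact h.2
    rw [this]
    exact (hmeas _ (hK.inter_right (isClosed_Iic.preimage he))).union
      ((hmeas K hK).compl.inter (MeasurableSet.const _))
  refine ⟨t, ?_, htK, fun z hz => (ht1 z hz).1⟩
  have := hemb.measurable_invFun.comp hs
  convert this using 1
  ext1 z
  exact (hemb.leftInverse_invFun (t z)).symm

theorem core_sel {Ξ X : Type*} [MeasurableSpace Ξ]
    [TopologicalSpace X] [T2Space X] [MeasurableSpace X] [BorelSpace X]
    (hX : IsSuslin X) [Nonempty X] (ν : Measure Ξ) [IsFiniteMeasure ν]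
    (S : Set (Ξ × X)) (hS : MeasurableSet S) {ε : ℝ≥0∞} (hε : ε ≠ 0) :
    ∃ (A : Set Ξ) (xb : Ξ → X), MeasurableSet A ∧ Measurable xb ∧
      IsCompact (closure (range xb)) ∧ (∀ ξ ∈ A, (ξ, xb ξ) ∈ S) ∧
      ν {ξ | ∃ y, (ξ, y) ∈ S} ≤ ν A + ε := by
  obtain ⟨P, tP, hP, f, hf, hfs⟩ := hX
  let : MeasurableSpace P := borel P
  have : BorelSpace P := ⟨rfl⟩
  let S' : Set (Ξ × P) := (fun q => (q.1, f q.2)) ⁻¹' S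
  have hS' : MeasurableSet S' :=
    (measurable_fst.prodMk (hf.measurable.comp measurable_snd)) hS
  obtain ⟨Z, i1, i2, φ, T, hφ, hT, hST⟩ := exists_factor hS'
  have hmem : ∀ ξ p, (ξ, f p) ∈ S ↔ (φ ξ, p) ∈ T := by
    intro ξ p
    have : (ξ, p) ∈ S' ↔ (φ ξ, p) ∈ T := by rw [hST]; exact Iff.rfl
    exact this
  let := upgradeStandardBorel Z
  have hTa : AnalyticSet T := hT.analyticSet
  rw [AnalyticSet] at hTa
  rcases hTa with rfl | ⟨g, hg, hgr⟩
  · refine ⟨∅, fun _ => Classical.arbitrary X, MeasurableSet.empty, measurable_const, ?_, by simp, ?_⟩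
    · refine IsCompact.closure_of_subset (isCompact_singleton (x := Classical.arbitrary X)) ?_
      rintro _ ⟨_, rfl⟩; rfl
    · have : {ξ | ∃ y, (ξ, y) ∈ S} = ∅ := by
        ext ξ
        simp only [mem_ofPred_eq, mem_empty_iff_false, iff_false, not_exists]
        intro y hy
        obtain ⟨p, rfl⟩ := hfs y
        exact (hmem ξ p).1 hy
      simp [this]
  let F : (ℕ → ℕ) → Z := fun x => (g x).1
  have hF : Continuous F := continuous_fst.comp hg
  obtain ⟨n, hn⟩ := exists_box (ν.map φ) F hF hε
  set K : Set (ℕ → ℕ) := {x | ∀ i, x i ≤ n i} with hKdef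
  have hKc : IsCompact K := by
    have : K = Set.pi univ fun i => Iic (n i) := by
      ext x; simp [hKdef, Pi.le_def]
    rw [this]
    exact isCompact_univ_pi fun i => (finite_Iic (n i)).isCompact
  obtain ⟨t, ht, htK, hts⟩ := exists_sel F hF K hKc ⟨fun _ => 0, fun i => Nat.zero_le _⟩
  have hFK : MeasurableSet (F '' K) := (hKc.image hF).isClosed.measurableSet
  have hc : Continuous fun x => f (g x).2 := hf.comp (continuous_snd.comp hg)
  refine ⟨φ ⁻¹' (F '' K), fun ξ => f (g (t (φ ξ))).2, hφ hFK, ?_, ?_, ?_, ?_⟩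
  · exact hc.measurable.comp (ht.comp hφ)
  · refine IsCompact.closure_of_subset (hKc.image hc) ?_
    rintro _ ⟨ξ, rfl⟩
    exact ⟨t (φ ξ), htK _, rfl⟩
  · intro ξ hξ
    rw [hmem]
    have h1 : F (t (φ ξ)) = φ ξ := hts _ hξ
    have h2 : g (t (φ ξ)) ∈ T := hgr ▸ mem_range_self _
    have h3 : g (t (φ ξ)) = (φ ξ, (g (t (φ ξ))).2) := Prod.ext h1 rfl
    rwa [h3] at h2
  · have h1 : {ξ | ∃ y, (ξ, y) ∈ S} = φ ⁻¹' (range F) := by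
      ext ξ
      constructor
      · rintro ⟨y, hy⟩
        obtain ⟨p, rfl⟩ := hfs y
        have := (hmem ξ p).1 hy
        rw [← hgr] at this
        obtain ⟨x, hx⟩ := this
        exact ⟨x, by simp [F, hx]⟩
      · rintro ⟨x, hx⟩
        refine ⟨f (g x).2, (hmem _ _).2 ?_⟩
        have h2 : g x ∈ T := hgr ▸ mem_range_self _
        have h3 : g x = (φ ξ, (g x).2) := Prod.ext hx rfl
        rwa [h3] at h2
    rw [h1, ← Measure.map_apply hφ hFK]
    exact (Measure.le_map_apply hφ.aemeasurable _).trans hn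

theorem proj_meas {Ξ X : Type*} [MeasurableSpace Ξ]
    [TopologicalSpace X] [T2Space X] [MeasurableSpace X] [BorelSpace X]
    (hX : IsSuslin X) [Nonempty X] (m : Measure Ξ) [SigmaFinite m] (hm : m.IsComplete)
    (S : Set (Ξ × X)) (hS : MeasurableSet S) :
    MeasurableSet {ξ | ∃ y, (ξ, y) ∈ S} := by
  have hsel : ∀ k : ℕ, ∃ A : Set Ξ, MeasurableSet A ∧ A ⊆ {ξ | ∃ y, (ξ, y) ∈ S} ∧
      m.toFinite {ξ | ∃ y, (ξ, y) ∈ S} ≤ m.toFinite A + ((k : ℝ≥0∞) + 1)⁻¹ := by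
    intro k
    obtain ⟨A, xb, hA, -, -, h1, h2⟩ := core_sel hX m.toFinite S hS
      (ε := ((k : ℝ≥0∞) + 1)⁻¹) (by simp)
    exact ⟨A, hA, fun ξ hξ => ⟨_, h1 ξ hξ⟩, h2⟩
  choose A hA hAs hAm using hsel
  set E := {ξ | ∃ y, (ξ, y) ∈ S}
  have hB : MeasurableSet (⋃ k, A k) := MeasurableSet.iUnion hA
  have hBE : (⋃ k, A k) ⊆ E := iUnion_subset hAs
  have hle : m.toFinite E ≤ m.toFinite (⋃ k, A k) := by
    have hlim : Tendsto (fun k : ℕ => m.toFinite (⋃ k, A k) + ((k : ℝ≥0∞) + 1)⁻¹) atTop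
        (𝓝 (m.toFinite (⋃ k, A k) + 0)) := by
      refine Tendsto.const_add _ ?_
      have := (tendsto_add_atTop_iff_nat 1).2 ENNReal.tendsto_inv_nat_nhds_zero
      simpa using this
    rw [add_zero] at hlim
    refine ge_of_tendsto' hlim fun k => (hAm k).trans ?_
    gcongr
    exact subset_iUnion A k
  have hae : (⋃ k, A k) =ᵐ[m.toFinite] E :=
    ae_eq_of_subset_of_measure_ge hBE hle hB.nullMeasurableSet (measure_ne_top _ _)
  have : NullMeasurableSet E m.toFinite := hB.nullMeasurableSet.congr hae
  have h2 : NullMeasurableSet E m := this.mono_ac (absolutelyContinuous_toFinite m)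
  exact h2.measurable_of_complete

theorem erealPos_eq (a : EReal) : erealPos a = a.toENNReal := by
  unfold erealPos EReal.toENNReal
  congr

theorem toENNReal_mono : Monotone EReal.toENNReal := fun _ _ h => EReal.toENNReal_le_toENNReal h

theorem erealPos_mono : Monotone erealPos := fun a b h => by
  rw [erealPos_eq, erealPos_eq]; exact toENNReal_mono h

theorem measurable_erealPos : Measurable erealPos := by
  have : erealPos = EReal.toENNReal := funext erealPos_eq
  rw [this]; exact measurable_ereal_toENNReal

theorem erealPos_coe (a : ℝ≥0∞) : erealPos (a : EReal) = a := by
  rw [erealPos_eq]; simp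

theorem erealPos_aux1 (g : EReal) (k : ℕ) (a : ℝ≥0∞) :
    erealPos (max g (-((k : ℝ≥0∞) : EReal)) + (a : EReal)) ≤ erealPos g + a := by
  simp only [erealPos_eq]
  refine EReal.toENNReal_add_le.trans ?_
  rw [EReal.toENNReal_coe, toENNReal_mono.map_max]
  gcongr
  refine max_le le_rfl ?_
  rw [EReal.toENNReal_of_nonpos]
  · exact zero_le
  · rw [EReal.neg_le, neg_zero]; exact EReal.coe_ennreal_nonneg _

theorem erealPos_aux2 (g : EReal) (k : ℕ) (a : ℝ≥0∞) (ha : a ≠ ⊤) :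
    min (erealPos (-g)) k ≤
      erealPos (-(max g (-((k : ℝ≥0∞) : EReal)) + (a : EReal))) + a := by
  simp only [erealPos_eq]
  lift a to NNReal using ha
  have h1 : min (-g) ((k : ℝ≥0∞) : EReal) =
      -(max g (-((k : ℝ≥0∞) : EReal)) + ((a : ℝ≥0∞) : EReal)) + ((a : ℝ≥0∞) : EReal) := by
    have h2 : ((a : ℝ≥0∞) : EReal) = ((a : ℝ) : EReal) := rfl
    rw [EReal.neg_add (by simp) (by simp), h2, EReal.sub_add_cancel]
    have h3 : Antitone (fun x : EReal => -x) := fun x y h => EReal.neg_le_neg_iff.2 h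
    rw [h3.map_max, neg_neg]
  calc min (-g).toENNReal k = (min (-g) ((k : ℝ≥0∞) : EReal)).toENNReal := by
        rw [toENNReal_mono.map_min, EReal.toENNReal_coe]
    _ ≤ _ := by
        rw [h1]
        refine EReal.toENNReal_add_le.trans ?_
        rw [EReal.toENNReal_coe]

theorem eIntegral_mono {Ξ : Type*} [MeasurableSpace Ξ] (m : Measure Ξ) {f g : Ξ → EReal}
    (hfg : ∀ ξ, f ξ ≤ g ξ) : eIntegral m f ≤ eIntegral m g := by
  have h1 : ∫⁻ a, erealPos (f a) ∂m ≤ ∫⁻ a, erealPos (g a) ∂m :=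
    lintegral_mono fun a => erealPos_mono (hfg a)
  have h2 : ∫⁻ a, erealPos (-g a) ∂m ≤ ∫⁻ a, erealPos (-f a) ∂m :=
    lintegral_mono fun a => erealPos_mono (EReal.neg_le_neg_iff.2 (hfg a))
  unfold eIntegral
  split_ifs with a b b
  · exact le_rfl
  · rw [a] at h1; exact absurd (top_le_iff.1 h1) b
  · exact le_top
  · exact EReal.sub_le_sub (EReal.coe_ennreal_le_coe_ennreal_iff.2 h1)
      (EReal.coe_ennreal_le_coe_ennreal_iff.2 h2)

theorem final_arith (c : EReal) (p n : ℝ≥0∞) (hp : p ≠ ⊤)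
    (H : ∀ δ : ℝ≥0∞, δ ≠ 0 → δ ≠ ⊤ → ∀ b : ℝ≥0∞, b ≠ ⊤ → b < n + δ →
      ∃ p' n' : ℝ≥0∞, c ≤ (p' : EReal) - n' ∧ p' ≤ p + δ + δ ∧ b ≤ n' + δ + δ) :
    c ≤ (p : EReal) - n := by
  have key : ∀ b : ℝ≥0∞, b ≠ ⊤ → b ≤ n → c ≤ (((p.toReal - b.toReal : ℝ)) : EReal) := by
    intro b hb hbn
    refine EReal.le_of_forall_lt_iff_le.1 fun z hz => ?_
    rw [EReal.coe_lt_coe_iff] at hz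
    set d : ℝ := (z - (p.toReal - b.toReal)) / 4 with hd
    have hd0 : 0 < d := by rw [hd]; linarith
    have hδ : ENNReal.ofReal d ≠ 0 := by simpa using hd0
    obtain ⟨p', n', h1, h2, h3⟩ := H (ENNReal.ofReal d) hδ ENNReal.ofReal_ne_top b hb
      ((ENNReal.lt_add_right hb hδ).trans_le (by gcongr))
    have hp' : p' ≠ ⊤ := ne_top_of_le_ne_top (by simp [hp]) h2
    refine h1.trans ?_
    by_cases hn' : n' = ⊤
    · simp [hn']
    have h2' := ENNReal.toReal_mono (by simp [hp]) h2
    have h3' := ENNReal.toReal_mono (by simp [hn']) h3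
    rw [ENNReal.toReal_add (by simp [hp]) (by simp), ENNReal.toReal_add hp (by simp),
      ENNReal.toReal_ofReal hd0.le] at h2'
    rw [ENNReal.toReal_add (by simp [hn']) (by simp), ENNReal.toReal_add hn' (by simp),
      ENNReal.toReal_ofReal hd0.le] at h3'
    rw [← EReal.coe_ennreal_toReal hp', ← EReal.coe_ennreal_toReal hn', ← EReal.coe_sub,
      EReal.coe_le_coe_iff]
    linarith
  by_cases hn : n = ⊤
  · have : c = ⊥ := by
      rw [EReal.eq_bot_iff_forall_lt]
      intro y
      refine (key (ENNReal.ofReal (p.toReal - y + 1)) ENNReal.ofReal_ne_top (by simp [hn])).trans_lt ?_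
      rw [EReal.coe_lt_coe_iff, ENNReal.toReal_ofReal']
      have := le_max_left (p.toReal - y + 1) 0
      linarith
    simp [this]
  · have := key n hn le_rfl
    rwa [EReal.coe_sub, EReal.coe_ennreal_toReal hp, EReal.coe_ennreal_toReal hn] at this


theorem approx {Ξ X : Type*} [MeasurableSpace Ξ]
    [TopologicalSpace X] [T2Space X] [MeasurableSpace X] [BorelSpace X]
    (hX : IsSuslin X) [Nonempty X]
    (m : Measure Ξ) [SigmaFinite m] (hm : m.IsComplete)
    (h : Ξ × X → EReal) (hh : Measurable h)
    (𝒳 : Set (Ξ → X)) (h𝒳meas : ∀ x ∈ 𝒳, Measurable x) (h𝒳dec : Decomposable m 𝒳)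
    (x0 : Ξ → X) (hx0 : x0 ∈ 𝒳) (hfin : ∫⁻ ξ, erealPos (h (ξ, x0 ξ)) ∂m ≠ ⊤)
    (δ : ℝ≥0∞) (hδ : δ ≠ 0) (hδt : δ ≠ ⊤) (b : ℝ≥0∞)
    (hbn : b < ∫⁻ ξ, erealPos (-(⨅ y, h (ξ, y))) ∂m + δ) :
    ∃ x ∈ 𝒳, ∫⁻ ξ, erealPos (h (ξ, x ξ)) ∂m ≤ ∫⁻ ξ, erealPos (⨅ y, h (ξ, y)) ∂m + δ + δ ∧
      b ≤ ∫⁻ ξ, erealPos (-h (ξ, x ξ)) ∂m + δ + δ := by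
  set g : Ξ → EReal := fun ξ => ⨅ y, h (ξ, y) with hgdef
  have hg : Measurable g := by
    refine measurable_of_Iio fun a => ?_
    have : g ⁻¹' Iio a = {ξ | ∃ y, (ξ, y) ∈ h ⁻¹' Iio a} := by
      ext ξ; simp [hgdef, iInf_lt_iff]
    rw [this]
    exact proj_meas hX m hm _ (hh measurableSet_Iio)
  have hmx : ∀ x ∈ 𝒳, Measurable fun ξ => h (ξ, x ξ) := fun x hx =>
    hh.comp (measurable_id.prodMk (h𝒳meas x hx))
  obtain ⟨β, hβ0, hβm, hβ⟩ := exists_pos_lintegral_lt_of_sigmaFinite m hδ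
  have hgtop : ∀ᵐ ξ ∂m, g ξ < ⊤ := by
    filter_upwards [ae_lt_top (measurable_erealPos.comp (hmx x0 hx0)) hfin] with ξ hξ
    refine lt_of_le_of_lt (iInf_le _ (x0 ξ)) ?_
    rw [lt_top_iff_ne_top]
    intro hc
    simp [hc, erealPos] at hξ
  let w : ℕ → Ξ → EReal := fun k ξ => max (g ξ) (-((k : ℝ≥0∞) : EReal)) + ((β ξ : ℝ≥0∞) : EReal)
  have hw : ∀ k, Measurable (w k) := by
    intro k
    exact (hg.max measurable_const).add (measurable_coe_ennreal_ereal.comp hβm.coe_nnreal_ennreal)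
  have hgw : ∀ k ξ, g ξ < ⊤ → g ξ < w k ξ := by
    intro k ξ hξ
    have h1 : max (g ξ) (-((k : ℝ≥0∞) : EReal)) ≠ ⊤ := by
      rw [← lt_top_iff_ne_top, max_lt_iff]
      refine ⟨hξ, ?_⟩
      rw [lt_top_iff_ne_top, Ne, EReal.neg_eq_top_iff]
      simp
    have h2 : max (g ξ) (-((k : ℝ≥0∞) : EReal)) ≠ ⊥ := by
      rw [← bot_lt_iff_ne_bot, lt_max_iff]
      right
      rw [bot_lt_iff_ne_bot, Ne, EReal.neg_eq_bot_iff]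
      rw [EReal.coe_ennreal_eq_top_iff]
      exact ENNReal.natCast_ne_top k
    refine (le_max_left _ (-((k : ℝ≥0∞) : EReal))).trans_lt ?_
    change _ < max (g ξ) (-((k : ℝ≥0∞) : EReal)) + (((β ξ : ℝ)) : EReal)
    generalize max (g ξ) (-((k : ℝ≥0∞) : EReal)) = r at *
    lift r to ℝ using ⟨h1, h2⟩
    rw [← EReal.coe_add, EReal.coe_lt_coe_iff]
    have : (0:ℝ) < β ξ := by exact_mod_cast hβ0 ξ
    linarith
  obtain ⟨ε, hε, hεs⟩ := ENNReal.exists_pos_sum_of_countable' (one_ne_zero (α := ℝ≥0∞)) ℕ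
  have hsel : ∀ k : ℕ, ∃ (A : Set Ξ) (xb : Ξ → X), MeasurableSet A ∧ Measurable xb ∧
      IsCompact (closure (range xb)) ∧ (∀ ξ ∈ A, h (ξ, xb ξ) < w k ξ) ∧
      m.toFinite Aᶜ ≤ ε k := by
    intro k
    have hS : MeasurableSet {q : Ξ × X | h q < w k q.1} :=
      measurableSet_lt hh ((hw k).comp measurable_fst)
    obtain ⟨A, xb, h1, h2, h3, h4, h5⟩ := core_sel hX m.toFinite _ hS (hε k).ne'
    refine ⟨A, xb, h1, h2, h3, h4, ?_⟩
    have h6 : m.toFinite {ξ | ∃ y, (ξ, y) ∈ {q : Ξ × X | h q < w k q.1}} = m.toFinite univ := by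
      refine measure_congr ?_
      filter_upwards [(toFinite_absolutelyContinuous m).ae_le hgtop] with ξ hξ
      have : ∃ y, h (ξ, y) < w k ξ := iInf_lt_iff.1 (hgw k ξ hξ)
      exact propext ⟨fun _ => trivial, fun _ => this⟩
    rw [h6] at h5
    rw [measure_compl h1 (measure_ne_top _ _)]
    exact tsub_le_iff_left.2 h5
  choose A xb hA hxb hcpt hAw hAm using hsel
  let B : ℕ → Set Ξ := fun k => A k ∩ spanningSets m k
  have hB : ∀ k, MeasurableSet (B k) := fun k => (hA k).inter (measurableSet_spanningSets m k)
  have hBfin : ∀ k, m (B k) < ⊤ := fun k =>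
    (measure_mono inter_subset_right).trans_lt (measure_spanningSets_lt_top m k)
  have hBev : ∀ᵐ ξ ∂m, ∀ᶠ k in atTop, ξ ∈ B k := by
    have h1 : ∀ᵐ ξ ∂m.toFinite, ∀ᶠ k in atTop, ξ ∉ (A k)ᶜ := by
      refine ae_eventually_notMem ?_
      exact ((ENNReal.tsum_le_tsum hAm).trans_lt (hεs.trans ENNReal.one_lt_top)).ne
    filter_upwards [(absolutelyContinuous_toFinite m).ae_le h1] with ξ hξ
    filter_upwards [hξ, eventually_ge_atTop (spanningSetsIndex m ξ)] with k hk1 hk2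
    exact ⟨not_not.1 hk1, mem_spanningSets_of_index_le m ξ hk2⟩
  let x : ℕ → Ξ → X := fun k ξ => if ξ ∈ B k then xb k ξ else x0 ξ
  have hx : ∀ k, x k ∈ 𝒳 := fun k => by
    convert h𝒳dec x0 hx0 (B k) (hB k) (hBfin k) (xb k) (hxb k) (hcpt k) using 1
    funext ξ
    by_cases hξ : ξ ∈ B k <;> simp [x, hξ]
  -- positive parts
  let R : ℕ → Ξ → ℝ≥0∞ := fun k => (B k)ᶜ.indicator fun ξ => erealPos (h (ξ, x0 ξ))
  have hu : Measurable fun ξ => erealPos (h (ξ, x0 ξ)) := measurable_erealPos.comp (hmx x0 hx0)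
  have hR : Tendsto (fun k => ∫⁻ ξ, R k ξ ∂m) atTop (𝓝 0) := by
    have := tendsto_lintegral_of_dominated_convergence (μ := m) (F := R) (f := fun _ => 0)
      (fun ξ => erealPos (h (ξ, x0 ξ))) (fun k => hu.indicator (hB k).compl)
      (fun k => Eventually.of_forall fun ξ => indicator_le_self _ _ ξ) hfin ?_
    · simpa using this
    · filter_upwards [hBev] with ξ hξ
      refine tendsto_const_nhds.congr' ?_
      filter_upwards [hξ] with k hk
      simp [R, hk]
  have hpos : ∀ k, ∫⁻ ξ, erealPos (h (ξ, x k ξ)) ∂m ≤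
      ∫⁻ ξ, erealPos (g ξ) ∂m + δ + ∫⁻ ξ, R k ξ ∂m := by
    intro k
    calc ∫⁻ ξ, erealPos (h (ξ, x k ξ)) ∂m
        ≤ ∫⁻ ξ, (erealPos (g ξ) + (β ξ : ℝ≥0∞)) + R k ξ ∂m := by
          refine lintegral_mono fun ξ => ?_
          by_cases hξ : ξ ∈ B k
          · simp only [x, hξ, if_true]
            refine le_trans ?_ le_self_add
            exact (erealPos_mono (hAw k ξ hξ.1).le).trans (erealPos_aux1 _ _ _)
          · simp only [x, hξ, if_false]
            refine le_trans ?_ le_add_self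
            simp [R, hξ]
      _ = ∫⁻ ξ, erealPos (g ξ) ∂m + ∫⁻ ξ, (β ξ : ℝ≥0∞) ∂m + ∫⁻ ξ, R k ξ ∂m := by
          rw [lintegral_add_right _ (hu.indicator (hB k).compl),
            lintegral_add_right _ hβm.coe_nnreal_ennreal]
      _ ≤ _ := by gcongr
  -- negative parts
  have hNm : ∀ k, Measurable fun ξ => erealPos (-h (ξ, x k ξ)) := fun k =>
    measurable_erealPos.comp (hmx _ (hx k)).neg
  have hneg : ∫⁻ ξ, erealPos (-g ξ) ∂m ≤
      liminf (fun k => ∫⁻ ξ, erealPos (-h (ξ, x k ξ)) ∂m) atTop + δ := by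
    calc ∫⁻ ξ, erealPos (-g ξ) ∂m
        ≤ ∫⁻ ξ, liminf (fun k => erealPos (-h (ξ, x k ξ))) atTop + (β ξ : ℝ≥0∞) ∂m := by
          refine lintegral_mono_ae ?_
          filter_upwards [hBev] with ξ hξ
          refine le_of_forall_lt fun c hc => ?_
          obtain ⟨c', hcc', hc'⟩ := exists_between hc
          refine hcc'.trans_le ?_
          rw [← tsub_le_iff_right]
          obtain ⟨K, hK⟩ := ENNReal.exists_nat_gt (hc'.ne_top)
          refine le_liminf_of_le (by isBoundedDefault) ?_
          filter_upwards [hξ, eventually_ge_atTop K] with k hk1 hk2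
          rw [tsub_le_iff_right]
          have h1 : c' ≤ min (erealPos (-g ξ)) k :=
            le_min hc'.le (hK.le.trans (by exact_mod_cast hk2))
          refine h1.trans ((erealPos_aux2 _ k (β ξ) ENNReal.coe_ne_top).trans ?_)
          gcongr
          refine erealPos_mono (EReal.neg_le_neg_iff.2 ?_)
          simp only [x, hk1, if_true]
          exact (hAw k ξ hk1.1).le
      _ = ∫⁻ ξ, liminf (fun k => erealPos (-h (ξ, x k ξ))) atTop ∂m + ∫⁻ ξ, (β ξ : ℝ≥0∞) ∂m :=
          lintegral_add_right _ hβm.coe_nnreal_ennreal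
      _ ≤ _ := by
          gcongr
          exact lintegral_liminf_le hNm
  have hev1 : ∀ᶠ k in atTop, ∫⁻ ξ, R k ξ ∂m < δ := hR.eventually_lt_const (pos_iff_ne_zero.2 hδ)
  have hev2 : ∀ᶠ k in atTop, b ≤ ∫⁻ ξ, erealPos (-h (ξ, x k ξ)) ∂m + δ + δ := by
    have hb2 : b < liminf (fun k => ∫⁻ ξ, erealPos (-h (ξ, x k ξ)) ∂m) atTop + (δ + δ) := by
      rw [← add_assoc]
      exact hbn.trans_le (by gcongr)
    by_cases hbd : b ≤ δ + δ
    · exact Eventually.of_forall fun k => by rw [add_assoc]; exact hbd.trans le_add_self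
    · have h1 : b - (δ + δ) < liminf (fun k => ∫⁻ ξ, erealPos (-h (ξ, x k ξ)) ∂m) atTop :=
        ENNReal.sub_lt_of_lt_add (not_le.1 hbd).le hb2
      filter_upwards [eventually_lt_of_lt_liminf h1] with k hk
      rw [add_assoc]
      exact tsub_le_iff_right.1 hk.le
  obtain ⟨k, hk1, hk2⟩ := (hev1.and hev2).exists
  exact ⟨x k, hx k, (hpos k).trans (by gcongr), hk2⟩

/-- **Interchange of minimization and integration** (Theorem 2.1): for a complete σ-finite
measure space `(Ξ,𝒜,m)`, a Suslin space `X`, a jointly measurable integrand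
`h : Ξ × X → ℝ ∪ {±∞}` and a decomposable family `𝒳 ⊆ L⁰(Ξ;X)`, one has
`inf_{x∈𝒳} ∫ h(ξ, x(ξ)) dm = ∫ inf_{x∈X} h(ξ,x) dm` as soon as the left side is `< +∞`. -/
theorem statement0 {Ξ X : Type*} [MeasurableSpace Ξ]
    [TopologicalSpace X] [T2Space X] [MeasurableSpace X] [BorelSpace X]
    (hX : IsSuslin X)
    (m : Measure Ξ) [SigmaFinite m] (hm : m.IsComplete)
    (h : Ξ × X → EReal) (hh : Measurable h)
    (𝒳 : Set (Ξ → X)) (h𝒳meas : ∀ x ∈ 𝒳, Measurable x) (h𝒳dec : Decomposable m 𝒳)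
    (hfin : (⨅ x ∈ 𝒳, eIntegral m fun ξ => h (ξ, x ξ)) < ⊤) :
    (⨅ x ∈ 𝒳, eIntegral m fun ξ => h (ξ, x ξ)) = eIntegral m fun ξ => ⨅ y : X, h (ξ, y) := by
  refine le_antisymm ?_ (le_iInf₂ fun x _ => eIntegral_mono m fun ξ => iInf_le _ (x ξ))
  obtain ⟨x0, hx0, hI⟩ : ∃ x0 ∈ 𝒳, (eIntegral m fun ξ => h (ξ, x0 ξ)) < ⊤ := by
    simpa only [iInf_lt_iff, exists_prop] using hfin
  rcases isEmpty_or_nonempty Ξ with hE | ⟨⟨ξ0⟩⟩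
  · refine (iInf₂_le x0 hx0).trans (le_of_eq ?_)
    congr 1
    exact funext fun ξ => hE.elim ξ
  have : Nonempty X := ⟨x0 ξ0⟩
  have hfin0 : ∫⁻ ξ, erealPos (h (ξ, x0 ξ)) ∂m ≠ ⊤ := by
    intro hc
    simp [eIntegral, hc] at hI
  have hgp : ∫⁻ ξ, erealPos (⨅ y, h (ξ, y)) ∂m ≠ ⊤ :=
    ne_top_of_le_ne_top hfin0 (lintegral_mono fun ξ => erealPos_mono (iInf_le _ (x0 ξ)))
  rw [show (eIntegral m fun ξ => ⨅ y : X, h (ξ, y)) =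
    ((∫⁻ ξ, erealPos (⨅ y, h (ξ, y)) ∂m : ℝ≥0∞) : EReal) -
      ((∫⁻ ξ, erealPos (-(⨅ y, h (ξ, y))) ∂m : ℝ≥0∞) : EReal) from if_neg hgp]
  refine final_arith _ _ _ hgp fun δ hδ hδt b _ hbn => ?_
  obtain ⟨x, hx, h1, h2⟩ := approx hX m hm h hh 𝒳 h𝒳meas h𝒳dec x0 hx0 hfin0 δ hδ hδt b hbn
  refine ⟨_, _, (iInf₂_le x hx).trans (le_of_eq ?_), h1, h2⟩
  refine if_neg ?_
  exact ne_top_of_le_ne_top (by simp [hgp, hδt]) h1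
end

section
/- Let (Ξ,𝒜,m) be a complete σ-finite measure space and let X be a Suslin space. If h : Ξ × X → ℝ ∪ {±∞} is 𝒜 ⊗ B(X)-measurable, then the function p(ξ) := inf_{x∈X} h(ξ, x) is 𝒜-measurable. -/
open MeasureTheory Filter Set Topology
open scoped ENNReal Classical

theorem analytic_nullMeas {C : Type*} [TopologicalSpace C] [T2Space C] [MeasurableSpace C]
    [OpensMeasurableSpace C] (μ : Measure C) [SFinite μ] {S : Set C} (hS : AnalyticSet S) :
    NullMeasurableSet S μ := by
  rw [AnalyticSet] at hS
  rcases hS with rfl | ⟨f, hf, rfl⟩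
  · exact MeasurableSet.empty.nullMeasurableSet
  let A : List ℕ → Set C := fun l => f '' {x | PiNat.res x l.length = l}
  let E : List ℕ → Set C := fun l => toMeasurable μ (A l) ∩ closure (A l)
  have hE : ∀ l, MeasurableSet (E l) := fun l =>
    (measurableSet_toMeasurable _ _).inter isClosed_closure.measurableSet
  have hAE : ∀ l, A l ⊆ E l := fun l => subset_inter (subset_toMeasurable _ _) subset_closure
  have hA : ∀ l, A l ⊆ ⋃ n : ℕ, A (n :: l) := by
    rintro l _ ⟨x, hx, rfl⟩
    refine mem_iUnion.2 ⟨x l.length, x, ?_, rfl⟩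
    simp only [mem_ofPred_eq, List.length_cons, PiNat.res_succ] at hx ⊢
    rw [hx]
  have hnull : ∀ l, μ (E l ∩ (⋃ n : ℕ, E (n :: l))ᶜ) = 0 := by
    intro l
    have hm : MeasurableSet (⋃ n : ℕ, E (n :: l))ᶜ := (MeasurableSet.iUnion fun n => hE _).compl
    refine measure_mono_null (inter_subset_inter_left _ inter_subset_left) ?_
    rw [Measure.measure_toMeasurable_inter_of_sFinite hm]
    have : A l ∩ (⋃ n : ℕ, E (n :: l))ᶜ = ∅ := by
      rw [← diff_eq, diff_eq_empty]
      exact (hA l).trans (iUnion_mono fun n => hAE _)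
    rw [this, measure_empty]
  have hA0 : A [] = range f := by
    simp [A]
  have hnull' : μ (⋃ l, E l ∩ (⋃ n : ℕ, E (n :: l))ᶜ) = 0 := measure_iUnion_null hnull
  have hsub : E [] \ range f ⊆ ⋃ l, E l ∩ (⋃ n : ℕ, E (n :: l))ᶜ := by
    rintro z ⟨hz, hzf⟩
    by_contra hcon
    have hnext : ∀ l, ∃ n : ℕ, z ∈ E l → z ∈ E (n :: l) := by
      intro l
      by_contra! h
      refine hcon (mem_iUnion.2 ⟨l, (h 0).1, ?_⟩)
      simp only [mem_compl_iff, mem_iUnion, not_exists]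
      exact fun n => (h n).2
    choose g hg using hnext
    let L : ℕ → List ℕ := fun n => Nat.rec [] (fun _ l => g l :: l) n
    have hzL : ∀ n, z ∈ E (L n) := by
      intro n
      induction n with
      | zero => exact hz
      | succ n ih => exact hg _ ih
    let σ : ℕ → ℕ := fun n => g (L n)
    have hres : ∀ n, PiNat.res σ n = L n := by
      intro n
      induction n with
      | zero => rfl
      | succ n ih => rw [PiNat.res_succ, ih]
    apply hzf
    refine ⟨σ, ?_⟩
    by_contra hne
    obtain ⟨U, V, hU, hV, hσU, hzV, hd⟩ := t2_separation hne
    have hop : IsOpen (f ⁻¹' U) := hU.preimage hf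
    obtain ⟨_, ⟨x, n, rfl⟩, hxn, hsub⟩ :=
      (PiNat.isTopologicalBasis_cylinders (fun _ : ℕ => ℕ)).exists_subset_of_mem_open
        (show σ ∈ f ⁻¹' U from hσU) hop
    have hzc := (hzL n).2
    obtain ⟨_, hwV, y, hy, rfl⟩ := mem_closure_iff.1 hzc V hV hzV
    refine disjoint_left.1 hd (hsub ?_) hwV
    rw [← PiNat.mem_cylinder_iff_eq.1 hxn, PiNat.cylinder_eq_res]
    simp only [mem_ofPred_eq, ← hres, PiNat.res_length] at hy ⊢
    exact hy
  have hsub2 : range f ⊆ E [] := hA0 ▸ hAE []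
  have : range f = E [] \ (E [] \ range f) := by
    ext z
    have := @hsub2 z
    simp only [Set.mem_sdiff]
    tauto
  rw [this]
  exact (hE _).nullMeasurableSet.diff
    (NullMeasurableSet.of_null (measure_mono_null hsub hnull'))

theorem factor_meas {Ξ P : Type*} [MeasurableSpace Ξ] [MeasurableSpace P]
    {B : Set (Ξ × P)} (hB : MeasurableSet B) :
    ∃ (C : Type) (_ : TopologicalSpace C) (_ : MeasurableSpace C) (_ : PolishSpace C)
      (_ : BorelSpace C) (φ : Ξ → C) (D : Set (C × P)), Measurable φ ∧ MeasurableSet D ∧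
      B = Prod.map φ id ⁻¹' D := by
  rw [← generateFrom_prod] at hB
  induction B, hB using MeasurableSpace.generateFrom_induction with
  | hC t ht _ =>
    obtain ⟨a, ha, b, hb, rfl⟩ := ht
    refine ⟨Bool, inferInstance, inferInstance, inferInstance, inferInstance,
      fun ξ => decide (ξ ∈ a), {true} ×ˢ b, ?_, (measurableSet_singleton _).prod hb, ?_⟩
    · refine measurable_to_bool ?_
      have ha' : MeasurableSet a := ha
      convert ha' using 1
      ext x; simp
    · ext ⟨x, y⟩; simp
  | empty =>
    exact ⟨Bool, inferInstance, inferInstance, inferInstance, inferInstance,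
      fun _ => true, ∅, measurable_const, MeasurableSet.empty, rfl⟩
  | compl t _ ih =>
    obtain ⟨C, i1, i2, i3, i4, φ, D, hφ, hD, rfl⟩ := ih
    exact ⟨C, i1, i2, i3, i4, φ, Dᶜ, hφ, hD.compl, rfl⟩
  | iUnion s _ ih =>
    choose C i1 i2 i3 i4 φ D hφ hD hs using ih
    refine ⟨∀ n, C n, inferInstance, inferInstance, inferInstance, inferInstance,
      fun ξ n => φ n ξ, ⋃ n, Prod.map (fun c => c n) id ⁻¹' D n, measurable_pi_lambda _ hφ,
      MeasurableSet.iUnion fun n => ((measurable_pi_apply n).prodMap measurable_id) (hD n), ?_⟩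
    rw [preimage_iUnion]
    refine iUnion_congr fun n => ?_
    rw [hs n]; rfl

theorem proj_meas_s1 {Ξ P : Type*} [MeasurableSpace Ξ] [TopologicalSpace P] [PolishSpace P]
    [MeasurableSpace P] [BorelSpace P] (m : Measure Ξ) [SigmaFinite m] (hm : m.IsComplete)
    {B : Set (Ξ × P)} (hB : MeasurableSet B) : MeasurableSet (Prod.fst '' B) := by
  obtain ⟨C, i1, i2, i3, i4, φ, D, hφ, hD, rfl⟩ := factor_meas hB
  have : Prod.fst '' (Prod.map φ id ⁻¹' D) = φ ⁻¹' (Prod.fst '' D) := by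
    ext x; simp
  rw [this]
  have hAn : AnalyticSet (Prod.fst '' D) := hD.analyticSet.image_of_continuous continuous_fst
  have hn := (analytic_nullMeas (m.map φ) hAn).preimage (hφ.quasiMeasurePreserving m)
  exact hn.measurable_of_complete

/-- For a complete σ-finite measure space `(Ξ,𝒜,m)`, a Suslin space `X` and a jointly
measurable `h : Ξ × X → ℝ ∪ {±∞}`, the function `p(ξ) = inf_{x∈X} h(ξ,x)` is
`𝒜`-measurable. -/
theorem statement1 {Ξ X : Type*} [MeasurableSpace Ξ]
    [TopologicalSpace X] [T2Space X] [MeasurableSpace X] [BorelSpace X]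
    (hX : IsSuslin X)
    (m : Measure Ξ) [SigmaFinite m] (hm : m.IsComplete)
    (h : Ξ × X → EReal) (hh : Measurable h) :
    Measurable fun ξ => ⨅ y : X, h (ξ, y) := by

  obtain ⟨P, iP, hP, f, hf, hfs⟩ := hX
  letI : MeasurableSpace P := borel P
  haveI : BorelSpace P := ⟨rfl⟩
  have hg : Measurable fun q : Ξ × P => h (q.1, f q.2) :=
    hh.comp (measurable_fst.prodMk (hf.measurable.comp measurable_snd))
  refine measurable_of_Iio fun a => ?_
  have : (fun ξ => ⨅ y : X, h (ξ, y)) ⁻¹' Iio a =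
      Prod.fst '' ((fun q : Ξ × P => h (q.1, f q.2)) ⁻¹' Iio a) := by
    ext ξ
    simp [iInf_lt_iff, hfs.exists]
  rw [this]
  exact proj_meas_s1 m hm (hg measurableSet_Iio)
end

section
/- Fix a finite horizon T > 0, a nonnegative Radon measure μ on [0,T], and a convex normal integrand h : [0,T] × ℝ^d → ℝ ∪ {±∞}. Let S_t := cl dom h_t and D(S) := {y ∈ D | y_t ∈ S_t for all t ∈ [0,T]}. Assume: (i) S_t = cl{y_t | y ∈ D(S)} for every t ∈ [0,T], and (ii) D(S) = cl(dom I_h ∩ D(S)), the closure taken in the supremum norm, where dom I_h = {y | I_h(y) < +∞}. If inf_{y∈D(S)} I_h(y) < +∞, then inf_{y∈D(S)} I_h(y) = ∫_{[0,T]} inf_{x∈ℝ^d} h_t(x) dμ(t). -/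
open MeasureTheory Filter Set Topology
open scoped ENNReal Classical

/-- Euclidean space `ℝ^d`. -/
abbrev Euc (d : ℕ) := EuclideanSpace ℝ (Fin d)

/-- A function `[0,T] → ℝ^d` (modelled on `ℝ`) is càdlàg: right-continuous on `[0,T)`
with left limits on `(0,T]`. -/
def IsCadlagOn (T : ℝ) {d : ℕ} (y : ℝ → Euc d) : Prop :=
  (∀ t ∈ Set.Ico (0:ℝ) T, Tendsto y (𝓝[>] t) (𝓝 (y t))) ∧
  (∀ t ∈ Set.Ioc (0:ℝ) T, ∃ l, Tendsto y (𝓝[<] t) (𝓝 l))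

/-- `h : [0,T] × ℝ^d → ℝ ∪ {±∞}` is a convex normal integrand: its epigraphical mapping
`t ⇒ {(x,α) | h t x ≤ α}` is closed convex-valued and measurable. -/
def IsConvexNormalIntegrand (T : ℝ) {d : ℕ} (h : ℝ → Euc d → EReal) : Prop :=
  (∀ t ∈ Set.Icc (0:ℝ) T, IsClosed {p : Euc d × ℝ | h t p.1 ≤ (p.2 : EReal)} ∧
      Convex ℝ {p : Euc d × ℝ | h t p.1 ≤ (p.2 : EReal)}) ∧
  (∀ O : Set (Euc d × ℝ), IsOpen O →
      MeasurableSet {t : ℝ | t ∈ Set.Icc (0:ℝ) T ∧ ∃ p ∈ O, h t p.1 ≤ (p.2 : EReal)})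


lemma sorg_countable (U : Set ℝ) (b : ℝ → ℝ) (hb : ∀ t ∈ U, t < b t) :
    ∃ I ⊆ U, I.Countable ∧ U ⊆ ⋃ t ∈ I, Ico t (b t) := by
  obtain ⟨J, hJU, hJc, hJ⟩ := TopologicalSpace.isOpen_biUnion_countable U (fun t => Ioo t (b t))
    (fun _ _ => isOpen_Ioo)
  set V := ⋃ t ∈ U, Ioo t (b t) with hV
  have hR : (U \ V).Countable := by
    apply Set.PairwiseDisjoint.countable_of_Ioo (y := b) _ (fun t ht => hb t ht.1)
    intro s hs t ht hst
    wlog H : s < t generalizing s t with h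
    · exact (h ht hs hst.symm (lt_of_le_of_ne (not_lt.1 H) hst.symm)).symm
    have : b s ≤ t := by
      by_contra hlt
      push Not at hlt
      exact ht.2 (mem_biUnion hs.1 ⟨H, hlt⟩)
    exact Set.disjoint_left.2 fun u hu hv => absurd (hu.2.trans_le this) (not_lt.2 hv.1.le)
  refine ⟨J ∪ (U \ V), union_subset hJU sdiff_subset, hJc.union hR, ?_⟩
  intro t ht
  by_cases htV : t ∈ V
  · rw [← hJ] at htV
    simp only [mem_iUnion] at htV ⊢
    obtain ⟨i, hi, hti⟩ := htV
    exact ⟨i, Or.inl hi, hti.1.le, hti.2⟩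
  · simp only [mem_iUnion]
    exact ⟨t, Or.inr ⟨ht, htV⟩, le_rfl, hb t ht⟩

lemma cadlag_right {d : ℕ} {T : ℝ} {y : ℝ → Euc d} (hy : IsCadlagOn T y) {O : Set (Euc d)}
    (hO : IsOpen O) {t : ℝ} (ht : t ∈ Icc (0:ℝ) T) (hyt : y t ∈ O) :
    ∃ b, t < b ∧ ∀ s ∈ Ico t b, s ≤ T → y s ∈ O := by
  rcases ht.2.lt_or_eq with h | h
  · have h1 := (hy.1 t ⟨ht.1, h⟩) (hO.mem_nhds hyt)
    obtain ⟨b, hb, hbs⟩ := mem_nhdsGT_iff_exists_Ioo_subset.1 h1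
    refine ⟨b, hb, fun s hs _ => ?_⟩
    rcases hs.1.lt_or_eq with h2 | h2
    · exact hbs ⟨h2, hs.2⟩
    · exact h2 ▸ hyt
  · refine ⟨t + 1, by linarith, fun s hs hsT => ?_⟩
    have : s = t := le_antisymm (h ▸ hsT) hs.1
    exact this ▸ hyt

lemma cadlag_meas {d : ℕ} {T : ℝ} {y : ℝ → Euc d} (hy : IsCadlagOn T y) {O : Set (Euc d)}
    (hO : IsOpen O) : MeasurableSet {t | t ∈ Icc (0:ℝ) T ∧ y t ∈ O} := by
  set U := {t | t ∈ Icc (0:ℝ) T ∧ y t ∈ O} with hU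
  have : ∀ t ∈ U, ∃ b, t < b ∧ ∀ s ∈ Ico t b, s ≤ T → y s ∈ O := fun t ht =>
    cadlag_right hy hO ht.1 ht.2
  choose! b hb hbs using this
  obtain ⟨I, hIU, hIc, hI⟩ := sorg_countable U b hb
  have : U = Icc 0 T ∩ ⋃ t ∈ I, Ico t (b t) := by
    apply Subset.antisymm
    · exact fun t ht => ⟨ht.1, hI ht⟩
    · rintro s ⟨hs, hs'⟩
      simp only [mem_iUnion] at hs'
      obtain ⟨t, ht, hst⟩ := hs'
      exact ⟨hs, hbs t (hIU ht) s hst hs.2⟩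
  rw [this]
  exact measurableSet_Icc.inter (MeasurableSet.biUnion hIc fun _ _ => measurableSet_Ico)

lemma exists_dense_family {d : ℕ} {T : ℝ} (DS : Set (ℝ → Euc d))
    (hDS : ∀ y ∈ DS, IsCadlagOn T y) :
    ∃ Y ⊆ DS, Y.Countable ∧ ∀ t ∈ Icc (0:ℝ) T, ∀ y ∈ DS, ∀ ε > 0, ∃ z ∈ Y,
      dist (z t) (y t) < ε := by
  have key : ∀ O : Set (Euc d), IsOpen O → ∃ Y ⊆ DS, Y.Countable ∧ ∀ t ∈ Icc (0:ℝ) T,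
      ∀ y ∈ DS, y t ∈ O → ∃ z ∈ Y, z t ∈ O := by
    intro O hO
    set U := {t | t ∈ Icc (0:ℝ) T ∧ ∃ y ∈ DS, y t ∈ O} with hU
    have : ∀ t ∈ U, ∃ y ∈ DS, ∃ b, t < b ∧ ∀ s ∈ Ico t b, s ≤ T → y s ∈ O := by
      rintro t ⟨ht, y, hy, hyt⟩
      exact ⟨y, hy, cadlag_right (hDS y hy) hO ht hyt⟩
    choose! y hy b hb hbs using this
    obtain ⟨I, hIU, hIc, hI⟩ := sorg_countable U b hb
    refine ⟨y '' I, ?_, hIc.image _, ?_⟩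
    · rintro _ ⟨t, ht, rfl⟩
      exact hy t (hIU ht)
    · intro s hs z hz hzs
      have h1 := hI (show s ∈ U from ⟨hs, z, hz, hzs⟩)
      simp only [mem_iUnion] at h1
      obtain ⟨t, ht, hst⟩ := h1
      exact ⟨y t, mem_image_of_mem _ ht, hbs t (hIU ht) s hst hs.2⟩
  choose! Y hY hYc hYd using key
  have hB := TopologicalSpace.isBasis_countableBasis (Euc d)
  refine ⟨⋃ O ∈ TopologicalSpace.countableBasis (Euc d), Y O, ?_, ?_, ?_⟩
  · exact iUnion₂_subset fun O hO => hY O (hB.isOpen hO)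
  · exact (TopologicalSpace.countable_countableBasis _).biUnion fun O hO => hYc O (hB.isOpen hO)
  · intro t ht y hy ε hε
    obtain ⟨O, hO, hyO, hOs⟩ := hB.exists_subset_of_mem_open (Metric.mem_ball_self hε)
      (Metric.isOpen_ball (x := y t) (ε := ε))
    obtain ⟨z, hz, hzt⟩ := hYd O (hB.isOpen hO) t ht y hy hyO
    exact ⟨z, mem_biUnion hO hz, hOs hzt⟩

/-- sets usable for càdlàg pasting -/
def CSet : Set (Set ℝ) := {B | MeasurableSet B ∧
  (∀ t, ∀ᶠ s in 𝓝[>] t, (s ∈ B ↔ t ∈ B)) ∧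
  (∀ t, (∀ᶠ s in 𝓝[<] t, s ∈ B) ∨ (∀ᶠ s in 𝓝[<] t, s ∉ B))}

lemma CSet_compl {B : Set ℝ} (hB : B ∈ CSet) : Bᶜ ∈ CSet := by
  refine ⟨hB.1.compl, fun t => ?_, fun t => ?_⟩
  · filter_upwards [hB.2.1 t] with s hs
    simp [hs]
  · rcases hB.2.2 t with h | h
    · right; filter_upwards [h] with s hs; simp [hs]
    · left; filter_upwards [h] with s hs; simp [hs]

lemma CSet_union {B C : Set ℝ} (hB : B ∈ CSet) (hC : C ∈ CSet) : B ∪ C ∈ CSet := by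
  refine ⟨hB.1.union hC.1, fun t => ?_, fun t => ?_⟩
  · filter_upwards [hB.2.1 t, hC.2.1 t] with s hs hs'
    simp [hs, hs']
  · rcases hB.2.2 t with h | h
    · left; filter_upwards [h] with s hs; exact Or.inl hs
    · rcases hC.2.2 t with h' | h'
      · left; filter_upwards [h'] with s hs; exact Or.inr hs
      · right; filter_upwards [h, h'] with s hs hs'; simp [hs, hs']

lemma CSet_empty : ∅ ∈ CSet := ⟨MeasurableSet.empty, by simp, by simp⟩

lemma CSet_Iio (a : ℝ) : Iio a ∈ CSet := by
  refine ⟨measurableSet_Iio, fun t => ?_, fun t => ?_⟩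
  · rcases lt_or_ge t a with h | h
    · filter_upwards [mem_nhdsWithin_of_mem_nhds (Iio_mem_nhds h)] with s hs
      simpa [h] using hs
    · filter_upwards [self_mem_nhdsWithin] with s hs
      have : t < s := hs
      exact ⟨fun h1 => absurd (mem_Iio.1 h1) (not_lt.2 (h.trans this.le)),
        fun h1 => absurd (mem_Iio.1 h1) (not_lt.2 h)⟩
  · rcases le_or_gt t a with h | h
    · left
      filter_upwards [self_mem_nhdsWithin] with s hs
      exact lt_of_lt_of_le hs h
    · right
      filter_upwards [mem_nhdsWithin_of_mem_nhds (Ioi_mem_nhds h)] with s hs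
      simpa using le_of_lt hs

lemma CSet_approx (μ : Measure ℝ) [IsFiniteMeasure μ] {A : Set ℝ} (hA : MeasurableSet A)
    {ε : ℝ≥0∞} (hε : 0 < ε) : ∃ B ∈ CSet, μ (symmDiff B A) < ε := by
  refine exists_measure_symmDiff_lt_of_generateFrom_isSetRing (C := CSet)
    ⟨CSet_empty, fun s t hs ht => CSet_union hs ht, fun s t hs ht => ?_⟩ ?_ ?_ hA hε
  · have : s \ t = (sᶜ ∪ t)ᶜ := by ext; simp
    rw [this]
    exact CSet_compl (CSet_union (CSet_compl hs) ht)
  · refine ⟨{univ}, countable_singleton _, ?_, by simp⟩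
    have := CSet_compl CSet_empty
    simpa using this
  · apply le_antisymm
    · rw [BorelSpace.measurable_eq (α := ℝ), borel_eq_generateFrom_Iio]
      apply MeasurableSpace.generateFrom_mono
      rintro _ ⟨a, rfl⟩
      exact CSet_Iio a
    · exact MeasurableSpace.generateFrom_le fun s hs => hs.1

lemma cadlag_piecewise {d : ℕ} {T : ℝ} {y z : ℝ → Euc d} (hy : IsCadlagOn T y)
    (hz : IsCadlagOn T z) {B : Set ℝ} (hB : B ∈ CSet) :
    IsCadlagOn T (fun t => if t ∈ B then y t else z t) := by
  refine ⟨fun t ht => ?_, fun t ht => ?_⟩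
  · by_cases h : t ∈ B
    · simp only [h, if_true]
      refine (hy.1 t ht).congr' ?_
      filter_upwards [hB.2.1 t] with s hs
      simp [hs, h]
    · simp only [h, if_false]
      refine (hz.1 t ht).congr' ?_
      filter_upwards [hB.2.1 t] with s hs
      simp [hs, h]
  · rcases hB.2.2 t with h | h
    · obtain ⟨l, hl⟩ := hy.2 t ht
      refine ⟨l, hl.congr' ?_⟩
      filter_upwards [h] with s hs
      simp [hs]
    · obtain ⟨l, hl⟩ := hz.2 t ht
      refine ⟨l, hl.congr' ?_⟩
      filter_upwards [h] with s hs
      simp [hs]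

lemma relint_lemma {d : ℕ} (H : Euc d → EReal)
    (hc : Convex ℝ {p : Euc d × ℝ | H p.1 ≤ (p.2 : EReal)}) (D : Set (Euc d))
    (hD1 : D ⊆ closure {x | H x < ⊤})
    (hD2 : ∀ x, H x < ⊤ → ∀ ε > 0, ∃ p ∈ D, dist p x < ε)
    (x : Euc d) (α : EReal) (hx : H x < α) : ∃ p ∈ D, H p < α := by
  obtain ⟨a1, hxa1, ha1⟩ := EReal.lt_iff_exists_real_btwn.1 hx
  obtain ⟨a0, hxa0, ha0⟩ := EReal.lt_iff_exists_real_btwn.1 hxa1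
  have ha01 : a0 < a1 := by exact_mod_cast ha0
  have hconv : ∀ (u v : Euc d) (a b : ℝ), H u ≤ a → H v ≤ b → ∀ l : ℝ, 0 ≤ l → l ≤ 1 →
      H ((1 - l) • u + l • v) ≤ (((1 - l) * a + l * b : ℝ) : EReal) := by
    intro u v a b hu hv l h0 h1
    have := hc (x := (u, a)) hu (y := (v, b)) hv (sub_nonneg.2 h1) h0 (by ring)
    simpa using this
  set dm := {x | H x < ⊤} with hdm
  have hxdm : x ∈ dm := lt_of_lt_of_le hxa0 le_top
  obtain ⟨s, hs, hspan, hind⟩ := exists_affineIndependent ℝ (Euc d) dm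
  have hsf : s.Finite := finite_set_of_fin_dim_affineIndependent ℝ hind
  have hM : ∃ M : ℝ, ∀ v ∈ s, H v ≤ M := by
    have : ∀ v ∈ s, ∃ m : ℝ, H v ≤ m := fun v hv => by
      obtain ⟨m, hm, -⟩ := EReal.lt_iff_exists_real_btwn.1 (show H v < ⊤ from hs hv)
      exact ⟨m, hm.le⟩
    choose! m hm using this
    obtain ⟨M, hM⟩ := (hsf.image m).bddAbove
    exact ⟨M, fun v hv => (hm v hv).trans (by exact_mod_cast hM (mem_image_of_mem m hv))⟩
  obtain ⟨M, hM⟩ := hM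
  have hhull : ∀ u ∈ convexHull ℝ s, H u ≤ M := by
    have : convexHull ℝ s ⊆ {u | H u ≤ M} := by
      apply convexHull_min hM
      intro u hu v hv a b ha hb hab
      have := hc (x := (u, M)) hu (y := (v, M)) hv ha hb hab
      have h2 : a * M + b * M = M := by rw [← add_mul, hab, one_mul]
      show H (a • u + b • v) ≤ M
      simpa [h2] using this
    exact this
  have hsne : s.Nonempty := by
    rw [← affineSpan_nonempty ℝ, hspan, affineSpan_nonempty]
    exact ⟨x, hxdm⟩
  obtain ⟨c, hcint⟩ := Set.Nonempty.intrinsicInterior (convex_convexHull ℝ s) hsne.convexHull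
  obtain ⟨c', hc', rfl⟩ := mem_intrinsicInterior.1 hcint
  have hAff : affineSpan ℝ (convexHull ℝ s) = affineSpan ℝ dm := by
    rw [affineSpan_convexHull, hspan]
  obtain ⟨r, hr, hball⟩ := Metric.mem_nhds_iff.1 (mem_interior_iff_mem_nhds.1 hc')
  have hball' : ∀ u ∈ affineSpan ℝ dm, dist u c' < r → H u ≤ M := by
    intro u hu hd
    rw [← hAff] at hu
    have h1 : (⟨u, hu⟩ : affineSpan ℝ (convexHull ℝ s)) ∈ Metric.ball c' r := Metric.mem_ball.2 hd
    have h2 := hball h1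
    exact hhull u h2
  have hcdm : H (c' : Euc d) ≤ M := hball' c' (hAff ▸ c'.2) (by simpa using hr)
  -- choice of l
  obtain ⟨l, hl0, hl1, hl⟩ : ∃ l : ℝ, 0 < l ∧ l ≤ 1 ∧ (1 - l) * a0 + l * M < a1 := by
    have hpos : 0 < |M - a0| + 1 := by positivity
    have h3 : 0 < (a1 - a0) / (|M - a0| + 1) := div_pos (by linarith) hpos
    refine ⟨min 1 ((a1 - a0) / (|M - a0| + 1)), lt_min one_pos h3, min_le_left _ _, ?_⟩
    set l := min 1 ((a1 - a0) / (|M - a0| + 1))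
    have h4 : 0 < l := lt_min one_pos h3
    have h5 : l * (|M - a0| + 1) ≤ a1 - a0 := by
      rw [← le_div_iff₀ hpos]; exact min_le_right _ _
    nlinarith [le_abs_self (M - a0)]
  have hx' : H ((1 - l) • x + l • (c' : Euc d)) < ⊤ :=
    lt_of_le_of_lt (hconv x c' a0 M hxa0.le hcdm l hl0.le hl1) (EReal.coe_lt_top _)
  obtain ⟨p, hpD, hp⟩ := hD2 _ hx' (l * r) (by positivity)
  have hpaff : p ∈ affineSpan ℝ dm := by
    have hcl : IsClosed (affineSpan ℝ dm : Set (Euc d)) := AffineSubspace.closed_of_finiteDimensional _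
    exact closure_minimal (subset_affineSpan ℝ dm) hcl (hD1 hpD)
  have hxaff : x ∈ affineSpan ℝ dm := subset_affineSpan ℝ dm hxdm
  set u := AffineMap.lineMap x p (1 / l) with hu
  have huaff : u ∈ affineSpan ℝ dm := AffineMap.lineMap_mem _ hxaff hpaff
  have hueq : u = x + (1 / l) • (p - x) := by
    rw [hu, AffineMap.lineMap_apply, vsub_eq_sub, vadd_eq_add, add_comm]
  have hpeq : p = (1 - l) • x + l • u := by
    rw [hueq, smul_add, smul_smul, mul_one_div_cancel hl0.ne']
    module
  have hdist : dist u c' < r := by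
    rw [hpeq, dist_add_left, dist_smul₀, Real.norm_of_nonneg hl0.le] at hp
    exact lt_of_mul_lt_mul_left hp hl0.le
  refine ⟨p, hpD, lt_of_le_of_lt ?_ ha1⟩
  rw [hpeq]
  refine (hconv x u a0 M hxa0.le (hball' u huaff hdist) l hl0.le hl1).trans ?_
  exact_mod_cast hl.le

lemma integrand_meas {d : ℕ} {T : ℝ} {h : ℝ → Euc d → EReal} (hh : IsConvexNormalIntegrand T h)
    {y : ℝ → Euc d} (hy : IsCadlagOn T y) :
    Measurable (fun t => if t ∈ Icc (0:ℝ) T then h t (y t) else ⊤) := by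
  have key : ∀ α : ℝ, MeasurableSet {t | t ∈ Icc (0:ℝ) T ∧ h t (y t) ≤ α} := by
    intro α
    obtain ⟨q, hq⟩ := TopologicalSpace.exists_dense_seq (Euc d × ℝ)
    have : {t | t ∈ Icc (0:ℝ) T ∧ h t (y t) ≤ α} = ⋂ n : ℕ, ⋃ k : ℕ,
        ({t | t ∈ Icc (0:ℝ) T ∧ y t ∈ {x | (x, α) ∈ Metric.ball (q k) (1 / ((n:ℝ) + 1))}} ∩
        {t | t ∈ Icc (0:ℝ) T ∧ ∃ p ∈ Metric.ball (q k) (1 / ((n:ℝ) + 1)),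
          h t p.1 ≤ (p.2 : EReal)}) := by
      ext t
      simp only [mem_iInter, mem_iUnion]
      constructor
      · rintro ⟨ht, hα⟩ n
        obtain ⟨k, hk⟩ := hq.exists_dist_lt (y t, α) (Nat.one_div_pos_of_nat (n := n) (α := ℝ))
        exact ⟨k, ⟨ht, hk⟩, ht, (y t, α), hk, hα⟩
      · intro H
        have ht : t ∈ Icc (0:ℝ) T := (H 0).choose_spec.1.1
        refine ⟨ht, ?_⟩
        have hcl := (hh.1 t ht).1
        have : (y t, α) ∈ closure {p : Euc d × ℝ | h t p.1 ≤ (p.2 : EReal)} := by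
          rw [Metric.mem_closure_iff]
          intro ε hε
          obtain ⟨n, hn⟩ := exists_nat_one_div_lt (half_pos hε)
          obtain ⟨k, ⟨_, hk⟩, _, p, hp, hpe⟩ := H n
          refine ⟨p, hpe, ?_⟩
          have h1 : dist (y t, α) (q k) < 1 / ((n:ℝ) + 1) := hk
          have h2 : dist p (q k) < 1 / ((n:ℝ) + 1) := hp
          have h3 := dist_triangle_right (y t, α) p (q k)
          linarith
        rw [hcl.closure_eq] at this
        exact this
    rw [this]
    refine MeasurableSet.iInter fun n => MeasurableSet.iUnion fun k => MeasurableSet.inter ?_ ?_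
    · apply cadlag_meas hy
      exact Metric.isOpen_ball.preimage (by fun_prop)
    · exact hh.2 _ Metric.isOpen_ball
  apply measurable_of_Iio
  intro α
  have : (fun t => if t ∈ Icc (0:ℝ) T then h t (y t) else ⊤) ⁻¹' Iio α =
      ⋃ r : {r : ℚ // ((r:ℝ) : EReal) < α}, {t | t ∈ Icc (0:ℝ) T ∧ h t (y t) ≤ ((r.1:ℝ) : EReal)} := by
    ext t
    simp only [mem_preimage, mem_Iio, mem_iUnion]
    constructor
    · intro H
      split_ifs at H with ht
      · obtain ⟨r, h1, h2⟩ := EReal.lt_iff_exists_rat_btwn.1 H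
        exact ⟨⟨r, h2⟩, ht, h1.le⟩
      · exact absurd H (not_lt.2 le_top)
    · rintro ⟨r, ht, hr⟩
      rw [if_pos ht]
      exact lt_of_le_of_lt hr r.2
  rw [this]
  exact MeasurableSet.iUnion fun r => key _

lemma erealPos_mono_s2 {a b : EReal} (h : a ≤ b) : erealPos a ≤ erealPos b :=
  EReal.toENNReal_le_toENNReal h

lemma erealPos_cont : Continuous erealPos := EReal.continuous_toENNReal

lemma eIntegral_lt_iff (μ : Measure ℝ) (f : ℝ → EReal) (b1 b2 : NNReal) :
    eIntegral μ f < (((b1 : ℝ) - (b2 : ℝ) : ℝ) : EReal) ↔ ∫⁻ a, erealPos (f a) ∂μ < ⊤ ∧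
      ∫⁻ a, erealPos (f a) ∂μ + b2 < b1 + ∫⁻ a, erealPos (-f a) ∂μ := by
  unfold eIntegral
  generalize ∫⁻ a, erealPos (f a) ∂μ = P
  generalize ∫⁻ a, erealPos (-f a) ∂μ = N
  by_cases hP : P = ⊤
  · simp [hP]
  · lift P to NNReal using hP
    simp only [ENNReal.coe_ne_top, if_false, ENNReal.coe_lt_top, true_and]
    by_cases hN : N = ⊤
    · subst hN
      have h1 : ((P : ℝ≥0∞) : EReal) - ((⊤ : ℝ≥0∞) : EReal) = ⊥ := by
        rw [EReal.coe_ennreal_top, EReal.sub_top]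
      rw [h1]
      simp only [EReal.bot_lt_coe, true_iff, add_top]
      exact ENNReal.add_lt_top.2 ⟨ENNReal.coe_lt_top, ENNReal.coe_lt_top⟩
    · lift N to NNReal using hN
      have h1 : ((P : ℝ≥0∞) : EReal) - ((N : ℝ≥0∞) : EReal) = (((P:ℝ) - (N:ℝ) : ℝ) : EReal) := by
        rw [EReal.coe_sub]; rfl
      rw [h1, EReal.coe_lt_coe_iff]
      norm_cast
      rw [← NNReal.coe_lt_coe]
      push_cast
      constructor <;> intro h <;> linarith

lemma eIntegral_congr_ae (μ : Measure ℝ) {f g : ℝ → EReal} (h : f =ᵐ[μ] g) :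
    eIntegral μ f = eIntegral μ g := by
  unfold eIntegral
  have h1 : ∫⁻ a, erealPos (f a) ∂μ = ∫⁻ a, erealPos (g a) ∂μ :=
    lintegral_congr_ae (h.mono fun x hx => by simp [hx])
  have h2 : ∫⁻ a, erealPos (-f a) ∂μ = ∫⁻ a, erealPos (-g a) ∂μ :=
    lintegral_congr_ae (h.mono fun x hx => by simp [hx])
  rw [h1, h2]

lemma eIntegral_mono_s2 (μ : Measure ℝ) {f g : ℝ → EReal} (h : ∀ t, f t ≤ g t) :
    eIntegral μ f ≤ eIntegral μ g := by
  have h1 : ∫⁻ a, erealPos (f a) ∂μ ≤ ∫⁻ a, erealPos (g a) ∂μ :=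
    lintegral_mono fun x => erealPos_mono_s2 (h x)
  have h2 : ∫⁻ a, erealPos (-g a) ∂μ ≤ ∫⁻ a, erealPos (-f a) ∂μ :=
    lintegral_mono fun x => erealPos_mono_s2 (EReal.neg_le_neg_iff.2 (h x))
  unfold eIntegral
  by_cases hg : ∫⁻ a, erealPos (g a) ∂μ = ⊤
  · simp [hg]
  · rw [if_neg hg, if_neg (ne_top_of_le_ne_top hg h1)]
    exact EReal.sub_le_sub (by exact_mod_cast h1) (by exact_mod_cast h2)

noncomputable def gmin (f : ℕ → ℝ → EReal) : ℕ → ℝ → EReal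
  | 0 => f 0
  | n + 1 => fun t => min (gmin f n t) (f (n + 1) t)

lemma gmin_anti (f : ℕ → ℝ → EReal) (t : ℝ) : Antitone fun n => gmin f n t :=
  antitone_nat_of_succ_le fun _ => min_le_left _ _

lemma gmin_le (f : ℕ → ℝ → EReal) (n : ℕ) (t : ℝ) : gmin f n t ≤ f n t := by
  cases n with
  | zero => exact le_rfl
  | succ n => exact min_le_right _ _

lemma gmin_tendsto (f : ℕ → ℝ → EReal) (t : ℝ) :
    Tendsto (fun n => gmin f n t) atTop (𝓝 (⨅ n, f n t)) := by
  have : ⨅ n, f n t = ⨅ n, gmin f n t := by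
    apply le_antisymm
    · refine le_iInf fun n => ?_
      induction n with
      | zero => exact iInf_le (fun n => f n t) 0
      | succ n ih => exact le_min ih (iInf_le (fun n => f n t) (n + 1))
    · exact iInf_mono fun n => gmin_le f n t
  rw [this]
  exact tendsto_atTop_iInf (gmin_anti f t)

lemma gmin_meas {f : ℕ → ℝ → EReal} (hf : ∀ n, Measurable (f n)) (n : ℕ) :
    Measurable (gmin f n) := by
  induction n with
  | zero => exact hf 0
  | succ n ih => exact ih.min (hf (n + 1))

lemma paste_approx (μ : Measure ℝ) [IsFiniteMeasure μ] (W : Set (ℝ → EReal))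
    (hW : ∀ F ∈ W, ∀ G ∈ W, ∀ B ∈ CSet, (fun t => if t ∈ B then F t else G t) ∈ W)
    (f : ℕ → ℝ → EReal) (hf : ∀ n, Measurable (f n)) (hfW : ∀ n, f n ∈ W) (n : ℕ) :
    ∀ ε : ℝ≥0∞, 0 < ε → ∃ F ∈ W, ∃ Z : Set ℝ, MeasurableSet Z ∧ μ Z < ε ∧
      (∀ t ∉ Z, F t ≤ gmin f n t) ∧
      ∀ t, erealPos (F t) ≤ ∑ i ∈ Finset.range (n + 1), erealPos (f i t) := by
  induction n with
  | zero =>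
    intro ε hε
    exact ⟨f 0, hfW 0, ∅, MeasurableSet.empty, by simpa using hε, fun t _ => le_rfl, by simp⟩
  | succ n ih =>
    intro ε hε
    have hε2 : 0 < ε / 2 := ENNReal.half_pos hε.ne'
    obtain ⟨F, hF, Z, hZm, hZ, hFZ, hFb⟩ := ih (ε / 2) hε2
    have hA : MeasurableSet {t | f (n + 1) t < gmin f n t} :=
      measurableSet_lt (hf _) (gmin_meas hf n)
    obtain ⟨B, hB, hBA⟩ := CSet_approx μ hA hε2
    refine ⟨_, hW _ (hfW (n + 1)) F hF B hB, Z ∪ symmDiff B {t | f (n + 1) t < gmin f n t},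
      hZm.union (hB.1.symmDiff hA), ?_, ?_, ?_⟩
    · calc _ ≤ μ Z + μ (symmDiff B {t | f (n + 1) t < gmin f n t}) := measure_union_le _ _
        _ < ε / 2 + ε / 2 := ENNReal.add_lt_add hZ hBA
        _ = ε := ENNReal.add_halves ε
    · intro t ht
      simp only [mem_union, mem_symmDiff, not_or, not_and, not_not] at ht
      obtain ⟨htZ, h1, h2⟩ := ht
      show _ ≤ min (gmin f n t) (f (n + 1) t)
      by_cases htB : t ∈ B
      · have h3 : f (n + 1) t < gmin f n t := h1 htB
        simp only [htB, if_true]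
        exact le_min h3.le le_rfl
      · have h3 : ¬ f (n + 1) t < gmin f n t := fun h => htB (h2 h)
        simp only [htB, if_false]
        exact le_min (hFZ t htZ) ((hFZ t htZ).trans (not_lt.1 h3))
    · intro t
      rw [Finset.sum_range_succ]
      by_cases htB : t ∈ B
      · simp only [htB, if_true]
        exact le_add_self
      · simp only [htB, if_false]
        exact (hFb t).trans le_self_add

lemma main_abs (μ : Measure ℝ) [IsFiniteMeasure μ] (W : Set (ℝ → EReal))
    (hW : ∀ F ∈ W, ∀ G ∈ W, ∀ B ∈ CSet, (fun t => if t ∈ B then F t else G t) ∈ W)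
    (f : ℕ → ℝ → EReal) (hf : ∀ n, Measurable (f n)) (hfW : ∀ n, f n ∈ W)
    (hfi : ∀ n, ∫⁻ t, erealPos (f n t) ∂μ < ⊤) (β : ℝ)
    (hβ : eIntegral μ (fun t => ⨅ n, f n t) < β) : ∃ F ∈ W, eIntegral μ F < β := by
  obtain ⟨b1, b2, rfl⟩ : ∃ b1 b2 : NNReal, β = (b1 : ℝ) - b2 := by
    refine ⟨β.toNNReal, (-β).toNNReal, ?_⟩
    simp only [Real.coe_toNNReal']
    rcases le_total 0 β with h | h
    · rw [max_eq_left h, max_eq_right (by linarith)]; ring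
    · rw [max_eq_right h, max_eq_left (by linarith)]; ring
  rw [eIntegral_lt_iff] at hβ
  -- choose N
  have hlim1 : Tendsto (fun n => ∫⁻ t, erealPos (gmin f n t) ∂μ) atTop
      (𝓝 (∫⁻ t, erealPos (⨅ n, f n t) ∂μ)) := by
    refine tendsto_lintegral_of_dominated_convergence (fun t => erealPos (f 0 t))
      (fun n => erealPos_cont.measurable.comp (gmin_meas hf n)) (fun n => ?_) (hfi 0).ne ?_
    · exact ae_of_all _ fun t => erealPos_mono_s2 (gmin_anti f t (Nat.zero_le n))
    · exact ae_of_all _ fun t => (erealPos_cont.tendsto _).comp (gmin_tendsto f t)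
  have hlim2 : Tendsto (fun n => ∫⁻ t, erealPos (-gmin f n t) ∂μ) atTop
      (𝓝 (∫⁻ t, erealPos (-⨅ n, f n t) ∂μ)) := by
    refine lintegral_tendsto_of_tendsto_of_monotone (fun n => ?_) ?_ ?_
    · exact (erealPos_cont.measurable.comp (continuous_neg.measurable.comp
        (gmin_meas hf n))).aemeasurable
    · exact ae_of_all _ fun t m n hmn => erealPos_mono_s2 (EReal.neg_le_neg_iff.2 (gmin_anti f t hmn))
    · exact ae_of_all _ fun t =>
        ((erealPos_cont.comp continuous_neg).tendsto _).comp (gmin_tendsto f t)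
  obtain ⟨N, hN1, hN2⟩ : ∃ N, ∫⁻ t, erealPos (gmin f N t) ∂μ < ⊤ ∧
      ∫⁻ t, erealPos (gmin f N t) ∂μ + b2 < b1 + ∫⁻ t, erealPos (-gmin f N t) ∂μ :=
    ((hlim1.eventually_lt_const hβ.1).and
      ((hlim1.add_const (b2:ℝ≥0∞)).eventually_lt (hlim2.const_add (b1:ℝ≥0∞)) hβ.2)).exists
  set g := gmin f N with hg
  have hgm : Measurable g := gmin_meas hf N
  -- a finite-integral minorant of the negative part
  obtain ⟨φ, hφm, hφle, hφfin, hφ⟩ : ∃ φ : ℝ → ℝ≥0∞, Measurable φ ∧ (∀ t, φ t ≤ erealPos (-g t)) ∧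
      ∫⁻ t, φ t ∂μ < ⊤ ∧ ∫⁻ t, erealPos (g t) ∂μ + b2 < b1 + ∫⁻ t, φ t ∂μ := by
    have hl : Tendsto (fun k : ℕ => ∫⁻ t, min (erealPos (-g t)) k ∂μ) atTop
        (𝓝 (∫⁻ t, erealPos (-g t) ∂μ)) := by
      refine lintegral_tendsto_of_tendsto_of_monotone (fun n => ?_) ?_ ?_
      · exact ((erealPos_cont.measurable.comp (continuous_neg.measurable.comp hgm)).min
          measurable_const).aemeasurable
      · exact ae_of_all _ fun t m n hmn => min_le_min le_rfl (by exact_mod_cast hmn)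
      · refine ae_of_all _ fun t => ?_
        have := (tendsto_const_nhds (x := erealPos (-g t))).min ENNReal.tendsto_nat_nhds_top
        simpa using this
    obtain ⟨k, hk⟩ := ((tendsto_const_nhds).eventually_lt (hl.const_add (b1:ℝ≥0∞)) hN2).exists
    refine ⟨fun t => min (erealPos (-g t)) k, (erealPos_cont.measurable.comp
      (continuous_neg.measurable.comp hgm)).min measurable_const, fun t => min_le_left _ _, ?_, hk⟩
    calc ∫⁻ t, min (erealPos (-g t)) k ∂μ ≤ ∫⁻ t, (k:ℝ≥0∞) ∂μ := lintegral_mono fun t => min_le_right _ _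
      _ < ⊤ := by
        rw [lintegral_const]
        exact ENNReal.mul_lt_top (ENNReal.natCast_lt_top k) (measure_lt_top μ _)
  set Φ : ℝ → ℝ≥0∞ := fun t => ∑ i ∈ Finset.range (N + 1), erealPos (f i t) with hΦ
  have hfpm : ∀ i, Measurable fun t => erealPos (f i t) := fun i =>
    erealPos_cont.measurable.comp (hf i)
  have hΦfin : ∫⁻ t, Φ t ∂μ < ⊤ := by
    rw [hΦ, lintegral_finsetSum _ fun i _ => hfpm i]
    exact ENNReal.sum_lt_top.2 fun i _ => hfi i
  have hsum : ∫⁻ t, (Φ t + φ t) ∂μ ≠ ⊤ := by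
    rw [lintegral_add_right _ hφm]
    exact (ENNReal.add_lt_top.2 ⟨hΦfin, hφfin⟩).ne
  -- gap
  obtain ⟨ε, hε, hgap⟩ : ∃ ε : ℝ≥0∞, ε ≠ 0 ∧ ∫⁻ t, erealPos (g t) ∂μ + b2 + ε < b1 + ∫⁻ t, φ t ∂μ := by
    obtain ⟨r, h0, hr⟩ := ENNReal.lt_iff_exists_add_pos_lt.1 hφ
    exact ⟨r, by exact_mod_cast h0.ne', hr⟩
  obtain ⟨δ, hδ, hδs⟩ := exists_pos_setLIntegral_lt_of_measure_lt hsum hε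
  obtain ⟨F, hF, Z, hZm, hZ, hFZ, hFb⟩ := paste_approx μ W hW f hf hfW N δ hδ
  refine ⟨F, hF, (eIntegral_lt_iff _ _ _ _).2 ⟨(lintegral_mono hFb).trans_lt hΦfin, ?_⟩⟩
  have hs := hδs Z hZ
  rw [lintegral_add_right _ hφm] at hs
  have e1 : ∫⁻ t, erealPos (F t) ∂μ ≤ ∫⁻ t, erealPos (g t) ∂μ + ∫⁻ t in Z, Φ t ∂μ := by
    rw [← lintegral_add_compl (fun t => erealPos (F t)) hZm, add_comm]
    refine add_le_add ?_ (lintegral_mono hFb)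
    refine (setLIntegral_mono' hZm.compl fun t ht => erealPos_mono_s2 (hFZ t ht)).trans ?_
    exact setLIntegral_le_lintegral _ _
  have e2 : ∫⁻ t, φ t ∂μ ≤ ∫⁻ t, erealPos (-F t) ∂μ + ∫⁻ t in Z, φ t ∂μ := by
    rw [← lintegral_add_compl φ hZm, add_comm]
    refine add_le_add ?_ le_rfl
    refine (setLIntegral_mono' hZm.compl fun t ht => (hφle t).trans
      (erealPos_mono_s2 (EReal.neg_le_neg_iff.2 (hFZ t ht)))).trans ?_
    exact setLIntegral_le_lintegral _ _
  have hZφ : ∫⁻ t in Z, φ t ∂μ ≠ ⊤ := ((setLIntegral_le_lintegral _ _).trans_lt hφfin).ne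
  refine lt_of_add_lt_add_right (a := ∫⁻ t in Z, φ t ∂μ) ?_
  calc ∫⁻ t, erealPos (F t) ∂μ + b2 + ∫⁻ t in Z, φ t ∂μ
      ≤ (∫⁻ t, erealPos (g t) ∂μ + ∫⁻ t in Z, Φ t ∂μ) + b2 + ∫⁻ t in Z, φ t ∂μ := by gcongr
    _ = ∫⁻ t, erealPos (g t) ∂μ + b2 + (∫⁻ t in Z, Φ t ∂μ + ∫⁻ t in Z, φ t ∂μ) := by ring
    _ ≤ ∫⁻ t, erealPos (g t) ∂μ + b2 + ε := by gcongr
    _ < b1 + ∫⁻ t, φ t ∂μ := hgap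
    _ ≤ b1 + (∫⁻ t, erealPos (-F t) ∂μ + ∫⁻ t in Z, φ t ∂μ) := by gcongr
    _ = _ := by ring

/-- **Interchange rule on the space of càdlàg functions** (Theorem 3.3): under
Assumption 3.2 (`S_t = cl{y_t | y ∈ D(S)}` and `D(S) = cl(dom I_h ∩ D(S))` in the
supremum norm), `inf_{y ∈ D(S)} I_h(y) = ∫ inf_{x∈ℝ^d} h_t(x) dμ(t)` as soon as the
left side is `< +∞`. -/
theorem statement2 {d : ℕ} (T : ℝ) (hT : 0 < T)
    (μ : Measure ℝ) [IsFiniteMeasure μ] (hμc : μ (Set.Icc (0:ℝ) T)ᶜ = 0)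
    (h : ℝ → Euc d → EReal) (hh : IsConvexNormalIntegrand T h)
    (DS : Set (ℝ → Euc d))
    (hDS : DS = {y | IsCadlagOn T y ∧
      ∀ t ∈ Set.Icc (0:ℝ) T, y t ∈ closure {x | h t x < ⊤}})
    -- Assumption 3.2 (i): `S_t = cl{y_t | y ∈ D(S)}` for all `t`
    (hS : ∀ t ∈ Set.Icc (0:ℝ) T,
      closure {x | h t x < ⊤} = closure {v | ∃ y ∈ DS, y t = v})
    -- Assumption 3.2 (ii): `D(S) = cl(dom I_h ∩ D(S))`, closure in the supremum norm
    (hcl : ∀ y : ℝ → Euc d, IsCadlagOn T y →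
      (y ∈ DS ↔ ∀ ε > (0:ℝ), ∃ z ∈ DS, eIntegral μ (fun t => h t (z t)) < ⊤ ∧
        ∀ t ∈ Set.Icc (0:ℝ) T, dist (z t) (y t) ≤ ε))
    (hfin : (⨅ y ∈ DS, eIntegral μ fun t => h t (y t)) < ⊤) :
    (⨅ y ∈ DS, eIntegral μ fun t => h t (y t)) = eIntegral μ fun t => ⨅ x : Euc d, h t x := by
  have hcad : ∀ y ∈ DS, IsCadlagOn T y := fun y hy => by rw [hDS] at hy; exact hy.1
  have hmem : ∀ y ∈ DS, ∀ t ∈ Set.Icc (0:ℝ) T, y t ∈ closure {x | h t x < ⊤} := fun y hy => by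
    rw [hDS] at hy; exact hy.2
  have hae : ∀ᵐ t ∂μ, t ∈ Set.Icc (0:ℝ) T := by
    rw [ae_iff]; exact hμc
  set f : (ℝ → Euc d) → ℝ → EReal := fun y t => if t ∈ Set.Icc (0:ℝ) T then h t (y t) else ⊤ with hfdef
  have hfI : ∀ y, eIntegral μ (f y) = eIntegral μ (fun t => h t (y t)) := fun y =>
    eIntegral_congr_ae μ (hae.mono fun t ht => by simp only [hfdef, if_pos ht])
  apply le_antisymm
  · -- the family
    obtain ⟨y0, hy0, -⟩ : ∃ y ∈ DS, eIntegral μ (fun t => h t (y t)) < ⊤ := by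
      simpa only [iInf_lt_iff, exists_prop] using hfin
    obtain ⟨Y, hYD, hYc, hYd⟩ := exists_dense_family DS hcad
    have happ : ∀ y ∈ DS, ∀ k : ℕ, ∃ z ∈ DS, eIntegral μ (fun t => h t (z t)) < ⊤ ∧
        ∀ t ∈ Set.Icc (0:ℝ) T, dist (z t) (y t) ≤ 1 / ((k:ℝ) + 1) := fun y hy k =>
      (hcl y (hcad y hy)).1 hy _ Nat.one_div_pos_of_nat
    choose! z hzD hzI hzd using happ
    have hYne : Y.Nonempty := by
      obtain ⟨w, hw, -⟩ := hYd 0 ⟨le_rfl, hT.le⟩ y0 hy0 1 one_pos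
      exact ⟨w, hw⟩
    obtain ⟨e, he⟩ := hYc.exists_eq_range hYne
    have heD : ∀ n, e n ∈ DS := fun n => hYD (he ▸ mem_range_self n)
    set w : ℕ → ℝ → Euc d := fun n => z (e n.unpair.1) n.unpair.2 with hw
    have hwD : ∀ n, w n ∈ DS := fun n => hzD _ (heD _) _
    have hwI : ∀ n, eIntegral μ (f (w n)) < ⊤ := fun n => by
      rw [hfI]; exact hzI _ (heD _) _
    have hwd : ∀ t ∈ Set.Icc (0:ℝ) T, ∀ x ∈ closure {x | h t x < ⊤}, ∀ ε > 0, ∃ n,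
        dist (w n t) x < ε := by
      intro t ht x hx ε hε
      rw [hS t ht] at hx
      obtain ⟨_, ⟨y, hy, rfl⟩, hxy⟩ := Metric.mem_closure_iff.1 hx (ε / 3) (by positivity)
      obtain ⟨u, hu, hud⟩ := hYd t ht y hy (ε / 3) (by positivity)
      rw [he] at hu
      obtain ⟨i, rfl⟩ := hu
      obtain ⟨k, hk⟩ := exists_nat_one_div_lt (show 0 < ε / 3 by positivity)
      refine ⟨Nat.pair i k, ?_⟩
      have h1 := hzd (e i) (heD i) k t ht
      have h2 : w (Nat.pair i k) = z (e i) k := by simp [hw]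
      rw [h2]
      have h3 := dist_triangle4 (z (e i) k t) (e i t) (y t) x
      rw [dist_comm (y t) x] at h3
      linarith
    have hp : ∀ t ∈ Set.Icc (0:ℝ) T, ⨅ n, f (w n) t = ⨅ x, h t x := by
      intro t ht
      have hft : ∀ n, f (w n) t = h t (w n t) := fun n => by simp only [hfdef, if_pos ht]
      apply le_antisymm
      · refine le_iInf fun x => le_of_forall_gt fun α hα => ?_
        obtain ⟨_, ⟨n, rfl⟩, hn⟩ := relint_lemma (h t) (hh.1 t ht).2 (range fun n => w n t)
          (by rintro _ ⟨n, rfl⟩; exact hmem _ (hwD n) t ht)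
          (fun x hx ε hε => by
            obtain ⟨n, hn⟩ := hwd t ht x (subset_closure hx) ε hε
            exact ⟨_, ⟨n, rfl⟩, hn⟩) x α hα
        exact lt_of_le_of_lt (iInf_le _ n) ((hft n).symm ▸ hn)
      · exact le_iInf fun n => (hft n).symm ▸ iInf_le _ _
    have hpI : eIntegral μ (fun t => ⨅ x, h t x) = eIntegral μ (fun t => ⨅ n, f (w n) t) :=
      eIntegral_congr_ae μ (hae.mono fun t ht => (hp t ht).symm)
    rw [hpI]
    refine le_of_forall_gt fun α hα => ?_
    obtain ⟨β, hβ, hβα⟩ := EReal.lt_iff_exists_real_btwn.1 hα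
    obtain ⟨F, ⟨y, hy, rfl⟩, hF⟩ := main_abs μ {F | ∃ y ∈ DS, f y = F} (by
        rintro _ ⟨y1, hy1, rfl⟩ _ ⟨y2, hy2, rfl⟩ B hB
        refine ⟨fun t => if t ∈ B then y1 t else y2 t, ?_, ?_⟩
        · rw [hDS]
          refine ⟨cadlag_piecewise (hcad _ hy1) (hcad _ hy2) hB, fun t ht => ?_⟩
          by_cases htB : t ∈ B
          · simp only [htB, if_true]; exact hmem _ hy1 t ht
          · simp only [htB, if_false]; exact hmem _ hy2 t ht
        · funext t
          by_cases htB : t ∈ B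
          · simp only [hfdef, htB, if_true]
          · simp only [hfdef, htB, if_false])
      (fun n => f (w n)) (fun n => integrand_meas hh (hcad _ (hwD n))) (fun n => ⟨_, hwD n, rfl⟩)
      (fun n => by
        rw [lt_top_iff_ne_top]
        intro hc
        have h1 := hwI n
        rw [eIntegral, if_pos hc] at h1
        exact lt_irrefl _ h1) β hβ
    rw [hfI] at hF
    exact lt_of_le_of_lt (iInf₂_le y hy) (hF.trans hβα)
  · exact le_iInf₂ fun y _ => eIntegral_mono_s2 μ fun t => iInf_le _ _
end

section
/- Let (Ω,F,P) be a complete probability space, T > 0 finite, and Γ : Ω × [0,T] ⇒ ℝ^d an F ⊗ B([0,T])-measurable set-valued mapping with closed convex values. Then the set-valued mapping C(Γ) : Ω ⇒ C([0,T];ℝ^d) defined by C(Γ)(ω) := {y ∈ C([0,T];ℝ^d) | y_t ∈ Γ_t(ω) for all t} has closed convex values (with respect to the supremum norm) and is measurable: {ω | C(Γ)(ω) ∩ O ≠ ∅} ∈ F for every open O ⊆ C([0,T];ℝ^d). -/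
open MeasureTheory Filter Set Topology
open scoped ENNReal Classical

lemma exists_bound_seq {X : Type*} [MeasurableSpace X] (μ : Measure X)
    (f : (ℕ → ℕ) → X) (c : ℝ≥0∞) (hc : c < μ (range f)) :
    ∃ n : ℕ → ℕ, ∀ k, c < μ (f '' {x | ∀ i < k, x i ≤ n i}) := by
  have step : ∀ k (n : ℕ → ℕ), c < μ (f '' {x | ∀ i < k, x i ≤ n i}) →
      ∃ m, c < μ (f '' {x | ∀ i < k + 1, x i ≤ Function.update n k m i}) := by
    intro k n h
    have hU : f '' {x | ∀ i < k, x i ≤ n i} =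
        ⋃ m, f '' {x | ∀ i < k + 1, x i ≤ Function.update n k m i} := by
      rw [← image_iUnion]
      congr 1
      ext x
      simp only [mem_setOf_eq, mem_iUnion]
      constructor
      · intro hx
        refine ⟨x k, fun i hi => ?_⟩
        rcases Nat.lt_succ_iff_lt_or_eq.1 hi with h | h
        · rw [Function.update_of_ne h.ne]; exact hx i h
        · subst h; simp
      · rintro ⟨m, hm⟩ i hi
        have := hm i (by omega)
        rwa [Function.update_of_ne hi.ne] at this
    have hmono : Monotone (fun m => f '' {x | ∀ i < k + 1, x i ≤ Function.update n k m i}) := by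
      intro a b hab
      apply image_mono
      intro x hx i hi
      refine (hx i hi).trans ?_
      by_cases h : i = k
      · subst h; simpa using hab
      · rw [Function.update_of_ne h, Function.update_of_ne h]
    rw [hU, hmono.measure_iUnion] at h
    exact lt_iSup_iff.1 h
  choose! m hm using step
  let g : ℕ → (ℕ → ℕ) := fun k => Nat.rec (fun _ => 0) (fun k n => Function.update n k (m k n)) k
  have hg : ∀ k, g (k + 1) = Function.update (g k) k (m k (g k)) := fun k => rfl
  have hgc : ∀ k, c < μ (f '' {x | ∀ i < k, x i ≤ g k i}) := by
    intro k
    induction k with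
    | zero => simpa using hc
    | succ k ih => rw [hg]; exact hm k _ ih
  have hst : ∀ k i, i < k → g k i = g (i + 1) i := by
    intro k
    induction k with
    | zero => intro i hi; omega
    | succ k ih =>
      intro i hi
      rcases Nat.lt_succ_iff_lt_or_eq.1 hi with h | h
      · rw [hg, Function.update_of_ne h.ne]; exact ih i h
      · subst h; rfl
  refine ⟨fun i => g (i + 1) i, fun k => ?_⟩
  convert hgc k using 4 with x
  ext x
  refine forall_congr' fun i => ?_
  refine forall_congr' fun hi => ?_
  rw [hst k i hi]

lemma exists_prefix_subset (n : ℕ → ℕ) (V : Set (ℕ → ℕ)) (hV : IsOpen V)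
    (h : {x | ∀ i, x i ≤ n i} ⊆ V) : ∃ k, {x : ℕ → ℕ | ∀ i < k, x i ≤ n i} ⊆ V := by
  by_contra! hcon
  have : ∀ k, ∃ x : ℕ → ℕ, (∀ i < k, x i ≤ n i) ∧ x ∉ V := fun k => by
    simpa [Set.not_subset] using hcon k
  choose x hx hxV using this
  have hK : IsCompact (Set.pi univ (fun i => Set.Iic (n i)) : Set (ℕ → ℕ)) :=
    isCompact_univ_pi fun i => (Set.finite_Iic (n i)).isCompact
  obtain ⟨a, ha, φ, hφ, hlim⟩ := hK.tendsto_subseq (x := fun k i => min (x k i) (n i))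
    (fun k i _ => by simp)
  have hlim2 : Tendsto (fun k => x (φ k)) atTop (𝓝 a) := by
    rw [tendsto_pi_nhds] at hlim ⊢
    intro i
    refine (hlim i).congr' ?_
    filter_upwards [eventually_gt_atTop i] with k hk
    have := hx (φ k) i (lt_of_lt_of_le hk (hφ.id_le k))
    simp [this]
  have haV : a ∈ V := h (fun i => ha i (mem_univ i))
  obtain ⟨k, hk⟩ := (hlim2.eventually (hV.mem_nhds haV)).exists
  exact hxV _ hk

lemma analytic_nullMeasurable {X : Type*} [TopologicalSpace X] [PolishSpace X]
    [MeasurableSpace X] [BorelSpace X] (μ : Measure X) [IsFiniteMeasure μ] (S : Set X)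
    (hS : AnalyticSet S) : NullMeasurableSet S μ := by
  rw [AnalyticSet] at hS
  rcases hS with rfl | ⟨f, hf, rfl⟩
  · exact MeasurableSet.empty.nullMeasurableSet
  have key : ∀ c < μ (range f), ∃ K ⊆ range f, MeasurableSet K ∧ c ≤ μ K := by
    intro c hc
    obtain ⟨n, hn⟩ := exists_bound_seq μ f c hc
    have hK : IsCompact {x : ℕ → ℕ | ∀ i, x i ≤ n i} := by
      have : IsCompact (Set.pi univ (fun i => Set.Iic (n i)) : Set (ℕ → ℕ)) :=
        isCompact_univ_pi fun i => (Set.finite_Iic (n i)).isCompact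
      convert this using 1
      ext x; simp [Pi.le_def]
    refine ⟨f '' {x | ∀ i, x i ≤ n i}, image_subset_range _ _,
      (hK.image hf).measurableSet, ?_⟩
    rw [Set.measure_eq_iInf_isOpen]
    refine le_iInf fun U => le_iInf fun hU => le_iInf fun hUo => ?_
    obtain ⟨k, hk⟩ := exists_prefix_subset n (f ⁻¹' U) (hUo.preimage hf) (image_subset_iff.1 hU)
    exact (hn k).le.trans (measure_mono (image_subset_iff.2 hk))
  by_cases h0 : μ (range f) = 0
  · exact NullMeasurableSet.of_null h0
  obtain ⟨u, -, hu, hlim⟩ := exists_seq_strictMono_tendsto' (pos_iff_ne_zero.2 h0)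
  choose K hKs hKm hKc using fun i => key (u i) (hu i).2
  have hsub : (⋃ i, K i) ⊆ range f := iUnion_subset hKs
  have hm : MeasurableSet (⋃ i, K i) := MeasurableSet.iUnion hKm
  refine NullMeasurableSet.congr hm.nullMeasurableSet
    (ae_eq_of_subset_of_measure_ge hsub ?_ hm.nullMeasurableSet (measure_ne_top _ _))
  exact le_of_tendsto' hlim fun i => (hKc i).trans (measure_mono (subset_iUnion K i))

lemma exists_factor_s8 {Ω Y : Type*} [MeasurableSpace Ω] [MeasurableSpace Y]
    (A : Set (Ω × Y)) (hA : MeasurableSet A) :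
    ∃ (X : Type) (_ : MeasurableSpace X) (_ : StandardBorelSpace X) (φ : Ω → X)
      (B : Set (X × Y)), Measurable φ ∧ MeasurableSet B ∧ A = {p | (φ p.1, p.2) ∈ B} := by
  induction A, hA using MeasurableSpace.induction_on_inter generateFrom_prod.symm isPiSystem_prod with
  | empty => exact ⟨Unit, inferInstance, inferInstance, fun _ => (), ∅, measurable_const,
      MeasurableSet.empty, by simp⟩
  | basic s hs =>
    obtain ⟨a, ha, b, hb, rfl⟩ := hs
    refine ⟨Prop, inferInstance, inferInstance, fun ω => ω ∈ a, {p | p ∈ {True} ×ˢ b}, ?_, ?_, ?_⟩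
    · exact measurable_mem.2 ha
    · exact (measurableSet_singleton True).prod hb
    · ext p; simp
  | compl s hs ih =>
    obtain ⟨X, _, _, φ, B, hφ, hB, rfl⟩ := ih
    exact ⟨X, _, inferInstance, φ, Bᶜ, hφ, hB.compl, rfl⟩
  | iUnion s hd hs ih =>
    choose X m1 m2 φ B hφ hB h using ih
    refine ⟨∀ n, X n, inferInstance, inferInstance, fun ω n => φ n ω,
      ⋃ n, (fun p => (p.1 n, p.2)) ⁻¹' (B n), measurable_pi_iff.2 hφ,
      MeasurableSet.iUnion fun n => ?_, ?_⟩
    · exact (((measurable_pi_apply n).comp measurable_fst).prodMk measurable_snd) (hB n)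
    · ext p
      simp only [mem_iUnion, mem_setOf_eq, mem_preimage]
      exact exists_congr fun n => by rw [h n]; rfl

lemma measurable_projection {Ω Y : Type*} [MeasurableSpace Ω] [MeasurableSpace Y]
    [StandardBorelSpace Y] (P : Measure Ω) [IsFiniteMeasure P] (hP : P.IsComplete)
    (A : Set (Ω × Y)) (hA : MeasurableSet A) : MeasurableSet {ω | ∃ y, (ω, y) ∈ A} := by
  obtain ⟨X, _, _, φ, B, hφ, hB, rfl⟩ := exists_factor_s8 A hA
  letI := upgradeStandardBorel X
  have h1 : AnalyticSet (Prod.fst '' B) := hB.analyticSet_image measurable_fst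
  have h2 := analytic_nullMeasurable (P.map φ) _ h1
  have h3 := h2.preimage (hφ.quasiMeasurePreserving P)
  have h4 := h3.measurable_of_complete
  convert h4 using 1
  ext ω
  simp

/-- **Measurability of the continuous selections mapping** (Corollary 4.4): for a
complete probability space `(Ω,F,P)` and an `F ⊗ B([0,T])`-measurable closed
convex-valued mapping `Γ : Ω × [0,T] ⇒ ℝ^d`, the mapping
`C(Γ)(ω) = {y ∈ C([0,T];ℝ^d) | y_t ∈ Γ_t(ω) ∀t}` is closed convex-valued and
measurable. -/
theorem statement8 {Ω : Type*} [mΩ : MeasurableSpace Ω] {d : ℕ} (T : ℝ) (hT : 0 < T)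
    (P : Measure Ω) [IsProbabilityMeasure P] (hP : P.IsComplete)
    (Γ : Ω → ℝ → Set (Euc d))
    (hval : ∀ ω : Ω, ∀ t ∈ Set.Icc (0:ℝ) T, IsClosed (Γ ω t) ∧ Convex ℝ (Γ ω t))
    (hmeas : ∀ O : Set (Euc d), IsOpen O →
      MeasurableSet {p : Ω × ℝ | p.2 ∈ Set.Icc (0:ℝ) T ∧ (Γ p.1 p.2 ∩ O).Nonempty}) :
    (∀ ω : Ω,
      IsClosed {y : C(Set.Icc (0:ℝ) T, Euc d) | ∀ t : Set.Icc (0:ℝ) T, y t ∈ Γ ω t} ∧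
      Convex ℝ {y : C(Set.Icc (0:ℝ) T, Euc d) | ∀ t : Set.Icc (0:ℝ) T, y t ∈ Γ ω t}) ∧
    (∀ O : Set C(Set.Icc (0:ℝ) T, Euc d), IsOpen O →
      MeasurableSet {ω : Ω |
        ({y : C(Set.Icc (0:ℝ) T, Euc d) | ∀ t : Set.Icc (0:ℝ) T, y t ∈ Γ ω t} ∩ O).Nonempty}) := by
  have hclosed : ∀ ω, IsClosed {y : C(Set.Icc (0:ℝ) T, Euc d) | ∀ t : Set.Icc (0:ℝ) T, y t ∈ Γ ω t} := by
    intro ω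
    rw [setOf_forall]
    exact isClosed_iInter fun t => (hval ω t t.2).1.preimage (continuous_eval_const t)
  refine ⟨fun ω => ⟨hclosed ω, ?_⟩, ?_⟩
  · intro x hx y hy a b ha hb hab t
    exact (hval ω t t.2).2 (hx t) (hy t) ha hb hab
  intro O hO
  letI : MeasurableSpace C(Set.Icc (0:ℝ) T, Euc d) := borel _
  haveI : BorelSpace C(Set.Icc (0:ℝ) T, Euc d) := ⟨rfl⟩
  haveI : Nonempty C(Set.Icc (0:ℝ) T, Euc d) := ⟨0⟩
  -- the sets of scenarios where a given function is an approximate selection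
  have hA : ∀ (y : C(Set.Icc (0:ℝ) T, Euc d)) (r : ℝ), MeasurableSet
      {ω : Ω | ∀ t : Set.Icc (0:ℝ) T, (Γ ω t ∩ Metric.ball (y t) r).Nonempty} := by
    intro y r
    have hm : MeasurableSet {p : Ω × ℝ | p.2 ∈ Set.Icc (0:ℝ) T ∧
        (Γ p.1 p.2 ∩ Metric.ball (Set.IccExtend hT.le y p.2) r).Nonempty} := by
      have : {p : Ω × ℝ | p.2 ∈ Set.Icc (0:ℝ) T ∧
          (Γ p.1 p.2 ∩ Metric.ball (Set.IccExtend hT.le y p.2) r).Nonempty} =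
          ⋃ (i : ℕ) (q : ℚ), {p : Ω × ℝ | p.2 ∈ Set.Icc (0:ℝ) T ∧
            (Γ p.1 p.2 ∩ Metric.ball (TopologicalSpace.denseSeq (Euc d) i) q).Nonempty} ∩
            {p : Ω × ℝ | dist (TopologicalSpace.denseSeq (Euc d) i)
              (Set.IccExtend hT.le y p.2) + q < r} := by
        ext p
        simp only [mem_setOf_eq, mem_iUnion, mem_inter_iff]
        constructor
        · rintro ⟨hp, x, hx, hxr⟩
          rw [Metric.mem_ball] at hxr
          set ε := (r - dist x (Set.IccExtend hT.le y p.2)) / 4 with hε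
          have hε0 : 0 < ε := by rw [hε]; linarith
          obtain ⟨i, hi⟩ := (TopologicalSpace.denseRange_denseSeq (Euc d)).exists_dist_lt x hε0
          obtain ⟨q, hq1, hq2⟩ := exists_rat_btwn (show ε < 2 * ε by linarith)
          refine ⟨i, q, ⟨hp, x, hx, Metric.mem_ball.2 (hi.trans hq1)⟩, ?_⟩
          have := dist_triangle_left (TopologicalSpace.denseSeq (Euc d) i)
            (Set.IccExtend hT.le y p.2) x
          linarith
        · rintro ⟨i, q, ⟨hp, x, hx, hxq⟩, hlt⟩
          refine ⟨hp, x, hx, ?_⟩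
          rw [Metric.mem_ball] at hxq ⊢
          have := dist_triangle x (TopologicalSpace.denseSeq (Euc d) i)
            (Set.IccExtend hT.le y p.2)
          linarith
      rw [this]
      refine MeasurableSet.iUnion fun i => MeasurableSet.iUnion fun q =>
        (hmeas _ Metric.isOpen_ball).inter ?_
      have hc : Continuous (Set.IccExtend hT.le y) := y.continuous.Icc_extend'
      have hc2 : Continuous (fun t : ℝ => dist (TopologicalSpace.denseSeq (Euc d) i)
          (Set.IccExtend hT.le y t) + q) := by fun_prop
      exact measurableSet_lt (hc2.measurable.comp measurable_snd) measurable_const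
    have hm2 := (measurable_projection P hP _
      (((measurableSet_Icc (a := (0:ℝ)) (b := T)).preimage
        (measurable_snd : Measurable (Prod.snd : Ω × ℝ → ℝ))).diff hm)).compl
    convert hm2 using 1
    ext ω
    simp only [mem_setOf_eq, mem_compl_iff, not_exists, mem_diff, mem_preimage, not_and, not_not]
    constructor
    · intro h t ht
      refine fun hn => hn ht ?_
      rw [Set.IccExtend_of_mem hT.le y ht]
      exact h ⟨t, ht⟩
    · intro h t
      have := not_not.1 fun hne => h t t.2 fun _ => hne
      rwa [Set.IccExtend_of_mem hT.le y t.2] at this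
  -- the graph is measurable
  have hG : MeasurableSet {p : Ω × C(Set.Icc (0:ℝ) T, Euc d) |
      (∀ t : Set.Icc (0:ℝ) T, p.2 t ∈ Γ p.1 t) ∧ p.2 ∈ O} := by
    have : {p : Ω × C(Set.Icc (0:ℝ) T, Euc d) |
        (∀ t : Set.Icc (0:ℝ) T, p.2 t ∈ Γ p.1 t) ∧ p.2 ∈ O} =
        (⋂ n : ℕ, ⋃ k : ℕ, {ω : Ω | ∀ t : Set.Icc (0:ℝ) T, (Γ ω t ∩ Metric.ball
          (TopologicalSpace.denseSeq C(Set.Icc (0:ℝ) T, Euc d) k t) (1 / ((n:ℝ) + 1))).Nonempty} ×ˢ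
          Metric.ball (TopologicalSpace.denseSeq C(Set.Icc (0:ℝ) T, Euc d) k) (1 / ((n:ℝ) + 1))) ∩
        Prod.snd ⁻¹' O := by
      ext ⟨ω, y⟩
      simp only [mem_setOf_eq, mem_inter_iff, mem_iInter, mem_iUnion, mem_prod, mem_preimage]
      refine and_congr_left fun _ => ?_
      constructor
      · intro h n
        obtain ⟨k, hk⟩ := (TopologicalSpace.denseRange_denseSeq
          C(Set.Icc (0:ℝ) T, Euc d)).exists_dist_lt y (Nat.one_div_pos_of_nat (α := ℝ) (n := n))
        exact ⟨k, fun t => ⟨y t, h t, lt_of_le_of_lt (ContinuousMap.dist_apply_le_dist t) hk⟩, hk⟩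
      · intro h t
        rw [← (hval ω t t.2).1.closure_eq, Metric.mem_closure_iff]
        intro ε hε
        obtain ⟨n, hn⟩ := exists_nat_one_div_lt (half_pos hε)
        obtain ⟨k, h1, h2⟩ := h n
        obtain ⟨x, hx, hxb⟩ := h1 t
        refine ⟨x, hx, ?_⟩
        rw [Metric.mem_ball] at hxb h2
        have h3 := (ContinuousMap.dist_apply_le_dist (f := y)
          (g := TopologicalSpace.denseSeq C(Set.Icc (0:ℝ) T, Euc d) k) t).trans_lt h2
        have h4 := dist_triangle_right (y t) x
          (TopologicalSpace.denseSeq C(Set.Icc (0:ℝ) T, Euc d) k t)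
        linarith
    rw [this]
    refine (MeasurableSet.iInter fun n => MeasurableSet.iUnion fun k =>
      (hA _ _).prod measurableSet_ball).inter (measurable_snd hO.measurableSet)
  exact measurable_projection P hP _ hG
end
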